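/- arXiv:0912.4653 — 2 statements merged into one kernel-verified Lean document; each statement's English description precedes it below -/
import Mathlib

section
/- Let Ω ⊂ ℝⁿ be a smoothly bounded convex domain. Then the signed distance function δ is convex on a neighborhood U of bΩ: H_δ(ξ,ξ)(x) ≥ 0 for all x ∈ U and all ξ ∈ ℝⁿ. Moreover, for x outside Ω̄ in U one has H_δ(ξ,ξ)(x) ≥ (1/2)H_δ(ξ,ξ)(b(x)). -/
open RealInnerProductSpace Metric Bornology

noncomputable abbrev E (n : ℕ) := EuclideanSpace ℝ (Fin n)

/-- The real Hessian bilinear form `H_f(ξ,ζ)(x)` of a function `f` at `x`. -/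
noncomputable def Hess {F : Type*} [NormedAddCommGroup F] [NormedSpace ℝ F]
    (f : F → ℝ) (x ξ ζ : F) : ℝ :=
  fderiv ℝ (fun y => fderiv ℝ f y ζ) x ξ

/-!
Near `bΩ` the foot point `b(x) = x - δ(x) ∇δ(x)` is the nearest boundary point and `∇δ(x)` is the
outward unit normal at `b(x)`, so that `∇δ = ∇δ ∘ b`. Differentiating this identity relates the
Hessians `A` of `δ` at `x` and `B` of `δ` at `b(x)` by `A + δ(x) B A = B`. The form `B` vanishes in
the normal direction and equals `H_r / ‖∇r‖` on tangent vectors, hence it is positive semidefinite;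
as soon as `|δ(x)| ‖B‖ ≤ 1` this forces `A ≥ B / 2 ≥ 0`, on either side of the boundary.

The smoothness of `δ` comes from inverting `(y, t) ↦ (y + t N(y), r(y))`, where `N = ∇r / ‖∇r‖`:
by Lagrange multipliers, if `y` is a boundary point nearest to `x`, then `(y, δ(x))` is mapped to
`(x, 0)`.
-/

open Filter Topology Set
open scoped Gradient

section PositiveOperator

variable {V : Type*} [NormedAddCommGroup V] [InnerProductSpace ℝ V] {A B : V →L[ℝ] V}

theorem norm_apply_sq_le_norm_mul_inner (hB : B.IsPositive) (η : V) :
    ‖B η‖ ^ 2 ≤ ‖B‖ * ⟪B η, η⟫ := by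
  rcases (sq_nonneg ‖B η‖).eq_or_lt with h0 | hpos
  · rw [← h0]
    exact mul_nonneg (norm_nonneg B) (hB.inner_nonneg_left η)
  have cauchy_schwarz : ⟪B η, B η⟫ * ⟪B (B η), η⟫ ≤ ⟪B η, η⟫ * ⟪B (B η), B η⟫ :=
    LinearMap.BilinForm.apply_mul_apply_le_of_forall_zero_le (innerₗ V ∘ₗ (B : V →ₗ[ℝ] V))
      hB.inner_nonneg_left η (B η)
  have hBB : ⟪B (B η), B η⟫ ≤ ‖B‖ * ‖B η‖ ^ 2 :=
    calc ⟪B (B η), B η⟫ ≤ ‖B (B η)‖ * ‖B η‖ := real_inner_le_norm _ _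
      _ ≤ ‖B‖ * ‖B η‖ * ‖B η‖ := by gcongr; exact B.le_opNorm _
      _ = ‖B‖ * ‖B η‖ ^ 2 := by ring
  refine le_of_mul_le_mul_right ?_ hpos
  calc ‖B η‖ ^ 2 * ‖B η‖ ^ 2 = ⟪B η, B η⟫ * ⟪B (B η), η⟫ := by
        rw [hB.inner_left_eq_inner_right (B η) η, real_inner_self_eq_norm_sq]
    _ ≤ ⟪B η, η⟫ * ⟪B (B η), B η⟫ := cauchy_schwarz
    _ ≤ ⟪B η, η⟫ * (‖B‖ * ‖B η‖ ^ 2) := by gcongr; exact hB.inner_nonneg_left η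
    _ = ‖B‖ * ⟪B η, η⟫ * ‖B η‖ ^ 2 := by ring

theorem half_inner_le_inner_of_add_smul_comp_eq (hB : B.IsPositive) {d : ℝ}
    (hd : |d| * ‖B‖ ≤ 1) (hAB : A + d • B ∘L A = B) (ξ : V) :
    1 / 2 * ⟪B ξ, ξ⟫ ≤ ⟪A ξ, ξ⟫ := by
  -- In terms of `η = (1 + d B)⁻¹ ξ` both quadratic forms involve only `B`.
  set η := ξ - d • A ξ with hη
  have hBη : B η = A ξ := by
    rw [hη, map_sub, map_smul, sub_eq_iff_eq_add]
    exact (DFunLike.congr_fun hAB ξ).symm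
  have hξ : ξ = η + d • B η := by rw [hBη, hη, sub_add_cancel]
  have hA : ⟪A ξ, ξ⟫ = ⟪B η, η⟫ + d * ‖B η‖ ^ 2 := by
    rw [← hBη, ← real_inner_self_eq_norm_sq, ← real_inner_smul_right, ← inner_add_right, ← hξ]
  have hBξ : ⟪B ξ, ξ⟫ = ⟪B η, η⟫ + 2 * (d * ‖B η‖ ^ 2) + d ^ 2 * ⟪B (B η), B η⟫ := by
    rw [hξ]
    simp only [map_add, map_smul, inner_add_left, inner_add_right, real_inner_smul_left,
      real_inner_smul_right, hB.inner_left_eq_inner_right (B η) η, real_inner_self_eq_norm_sq]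
    ring
  have hremainder : d ^ 2 * ⟪B (B η), B η⟫ ≤ ⟪B η, η⟫ := by
    have hnonneg := hB.inner_nonneg_left η
    calc d ^ 2 * ⟪B (B η), B η⟫ ≤ d ^ 2 * (‖B (B η)‖ * ‖B η‖) := by
          gcongr; exact real_inner_le_norm _ _
      _ ≤ d ^ 2 * (‖B‖ * ‖B η‖ * ‖B η‖) := by gcongr; exact B.le_opNorm _
      _ = d ^ 2 * (‖B‖ * ‖B η‖ ^ 2) := by ring
      _ ≤ d ^ 2 * (‖B‖ * (‖B‖ * ⟪B η, η⟫)) := by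
          gcongr; exact norm_apply_sq_le_norm_mul_inner hB η
      _ = (|d| * ‖B‖) ^ 2 * ⟪B η, η⟫ := by rw [← sq_abs d]; ring
      _ ≤ 1 * ⟪B η, η⟫ := by gcongr; exact pow_le_one₀ (by positivity) hd
      _ = ⟪B η, η⟫ := one_mul _
  linarith

end PositiveOperator

section Gradient

variable {V : Type*} [NormedAddCommGroup V] [InnerProductSpace ℝ V]

theorem inner_fderiv_self_of_norm_eq_one {ν : V → V} {x : V} (hν : DifferentiableAt ℝ ν x)
    (hunit : ∀ᶠ z in 𝓝 x, ‖ν z‖ = 1) (ξ : V) : ⟪fderiv ℝ ν x ξ, ν x⟫ = 0 := by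
  have hconst : (fun z => ⟪ν z, ν z⟫) =ᶠ[𝓝 x] fun _ => (1 : ℝ) :=
    hunit.mono fun z hz => by simp only [real_inner_self_eq_norm_sq, hz, one_pow]
  have h := fderiv_inner_apply ℝ hν hν ξ
  rw [hconst.fderiv_eq, fderiv_fun_const, real_inner_comm] at h
  simp only [Pi.zero_apply, zero_apply] at h
  linarith

variable [CompleteSpace V] {f : V → ℝ} {x : V} {k : WithTop ℕ∞}

theorem contDiffAt_gradient (hf : ContDiffAt ℝ (k + 1) f x) : ContDiffAt ℝ k (∇ f) x :=
  (InnerProductSpace.toDual ℝ V).symm.contDiff.contDiffAt.comp x (hf.fderiv_right le_rfl)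

theorem differentiableAt_gradient (hf : ContDiffAt ℝ 2 f x) : DifferentiableAt ℝ (∇ f) x := by
  rw [← one_add_one_eq_two] at hf
  exact (contDiffAt_gradient hf).differentiableAt one_ne_zero

theorem contDiffAt_add_one_of_gradient (hf : ContDiffAt ℝ k f x)
    (hdiff : ∀ᶠ z in 𝓝 x, DifferentiableAt ℝ f z) (hgrad : ContDiffAt ℝ k (∇ f) x) :
    ContDiffAt ℝ (k + 1) f x := by
  match k with
  | ⊤ => exact hf
  | (⊤ : ℕ∞) => exact hf
  | (n : ℕ) =>
    refine contDiffAt_succ_iff_hasFDerivAt.2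
      ⟨fderiv ℝ f, ⟨_, hdiff, fun z hz => DifferentiableAt.hasFDerivAt hz⟩, ?_⟩
    rw [← toDual_comp_gradient]
    exact (InnerProductSpace.toDual ℝ V).contDiff.contDiffAt.comp x hgrad

theorem hess_eq_inner_fderiv_gradient (hf : DifferentiableAt ℝ (∇ f) x) (ξ ζ : V) :
    Hess f x ξ ζ = ⟪fderiv ℝ (∇ f) x ξ, ζ⟫ := by
  simp only [Hess, ← inner_gradient_left (f := f)]
  rw [fderiv_inner_apply ℝ hf (differentiableAt_const ζ), fderiv_fun_const]
  simp only [Pi.zero_apply, zero_apply, inner_zero_right, zero_add]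

theorem isSymmetric_fderiv_gradient (hf : ContDiffAt ℝ 2 f x) :
    (fderiv ℝ (∇ f) x).IsSymmetric := by
  have hinner : ∀ u v, ⟪fderiv ℝ (∇ f) x u, v⟫ = fderiv ℝ (fderiv ℝ f) x u v := fun u v => by
    change ⟪fderiv ℝ ((InnerProductSpace.toDual ℝ V).symm ∘ fderiv ℝ f) x u, v⟫ = _
    rw [LinearIsometryEquiv.comp_fderiv]
    exact InnerProductSpace.toDual_symm_apply
  intro u v
  change ⟪fderiv ℝ (∇ f) x u, v⟫ = ⟪u, fderiv ℝ (∇ f) x v⟫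
  rw [real_inner_comm _ u, hinner, hinner]
  exact hf.isSymmSndFDerivAt (by simp) u v

theorem fderiv_gradient_apply_gradient_eq_zero (hf : ContDiffAt ℝ 2 f x)
    (hunit : ∀ᶠ z in 𝓝 x, ‖∇ f z‖ = 1) : fderiv ℝ (∇ f) x (∇ f x) = 0 := by
  refine ext_inner_right ℝ fun ξ => ?_
  rw [inner_zero_left, ← inner_fderiv_self_of_norm_eq_one (differentiableAt_gradient hf) hunit ξ,
    real_inner_comm (∇ f x)]
  exact isSymmetric_fderiv_gradient hf (∇ f x) ξ

end Gradient

section FootPoint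

variable {V : Type*} [NormedAddCommGroup V] [InnerProductSpace ℝ V] [CompleteSpace V]
  {δ : V → ℝ} {x : V}

/-- The foot point `x - δ(x) ∇δ(x)`. When `δ` is the signed distance to a smooth hypersurface and
`x` is close to it, this is the nearest-point projection `b(x)`. -/
noncomputable def footPoint (δ : V → ℝ) (x : V) : V := x - δ x • ∇ δ x

theorem footPoint_of_eq_zero (hx : δ x = 0) : footPoint δ x = x := by
  rw [footPoint, hx, zero_smul, sub_zero]

theorem hasFDerivAt_footPoint (hδ : DifferentiableAt ℝ δ x) (hgrad : DifferentiableAt ℝ (∇ δ) x) :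
    HasFDerivAt (footPoint δ) (ContinuousLinearMap.id ℝ V -
      (δ x • fderiv ℝ (∇ δ) x + (fderiv ℝ δ x).smulRight (∇ δ x))) x :=
  (hasFDerivAt_id x).sub (hδ.hasFDerivAt.smul hgrad.hasFDerivAt)

theorem fderiv_gradient_eq_of_comp_footPoint {ν : V → V} (hδ : DifferentiableAt ℝ δ x)
    (hgrad : DifferentiableAt ℝ (∇ δ) x) (hν : DifferentiableAt ℝ ν (footPoint δ x))
    (hcomp : ∀ᶠ z in 𝓝 x, ∇ δ z = ν (footPoint δ z)) (ξ : V) :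
    fderiv ℝ (∇ δ) x ξ =
      fderiv ℝ ν (footPoint δ x) (ξ - (δ x • fderiv ℝ (∇ δ) x ξ + ⟪∇ δ x, ξ⟫ • ∇ δ x)) := by
  have hchain :=
    (hν.hasFDerivAt.comp x (hasFDerivAt_footPoint hδ hgrad)).congr_of_eventuallyEq hcomp
  rw [inner_gradient_left]
  exact DFunLike.congr_fun hchain.fderiv ξ

theorem fderiv_gradient_add_smul_comp_eq (hx : ContDiffAt ℝ 2 δ x)
    (hfoot : ContDiffAt ℝ 2 δ (footPoint δ x)) (hunit : ∀ᶠ z in 𝓝 (footPoint δ x), ‖∇ δ z‖ = 1)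
    (hcomp : ∀ᶠ z in 𝓝 x, ∇ δ z = ∇ δ (footPoint δ z)) :
    fderiv ℝ (∇ δ) x + δ x • fderiv ℝ (∇ δ) (footPoint δ x) ∘L fderiv ℝ (∇ δ) x =
      fderiv ℝ (∇ δ) (footPoint δ x) := by
  ext ξ
  have hchain := fderiv_gradient_eq_of_comp_footPoint (hx.differentiableAt two_ne_zero)
    (differentiableAt_gradient hx) (differentiableAt_gradient hfoot) hcomp ξ
  rw [map_sub, map_add, map_smul, map_smul, hcomp.self_of_nhds,
    fderiv_gradient_apply_gradient_eq_zero hfoot hunit, smul_zero, add_zero] at hchain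
  exact eq_sub_iff_add_eq.1 hchain

end FootPoint

section UnitNormal

variable {V : Type*} [NormedAddCommGroup V] [InnerProductSpace ℝ V] [CompleteSpace V]
  {r : V → ℝ} {y : V} {k : WithTop ℕ∞}

/-- The unit normal field `∇r / ‖∇r‖` to the level sets of a defining function `r`, pointing
towards increasing values of `r`; it is zero where `∇r` vanishes. -/
noncomputable def unitNormal (r : V → ℝ) (y : V) : V := NormedSpace.normalize (∇ r y)

theorem norm_unitNormal (hy : ∇ r y ≠ 0) : ‖unitNormal r y‖ = 1 := NormedSpace.norm_normalize hy

theorem inner_gradient_eq_norm_mul_inner_unitNormal (r : V → ℝ) (y v : V) :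
    ⟪∇ r y, v⟫ = ‖∇ r y‖ * ⟪unitNormal r y, v⟫ := by
  rw [← real_inner_smul_left, unitNormal, NormedSpace.norm_smul_normalize]

theorem contDiffAt_unitNormal (hr : ContDiffAt ℝ (k + 1) r y) (hy : ∇ r y ≠ 0) :
    ContDiffAt ℝ k (unitNormal r) y :=
  have hgrad := contDiffAt_gradient hr
  ((hgrad.norm ℝ hy).inv (norm_ne_zero_iff.2 hy)).smul hgrad

theorem differentiableAt_unitNormal (hr : ContDiffAt ℝ 2 r y) (hy : ∇ r y ≠ 0) :
    DifferentiableAt ℝ (unitNormal r) y := by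
  rw [← one_add_one_eq_two] at hr
  exact (contDiffAt_unitNormal hr hy).differentiableAt one_ne_zero

theorem eventually_gradient_ne_zero (hr : ContDiffAt ℝ 1 r y) (hy : ∇ r y ≠ 0) :
    ∀ᶠ z in 𝓝 y, ∇ r z ≠ 0 := by
  rw [← zero_add 1] at hr
  exact (contDiffAt_gradient hr).continuousAt.eventually_ne hy

theorem inner_fderiv_unitNormal (hr : ContDiffAt ℝ 2 r y) (hy : ∇ r y ≠ 0) (u : V) {v : V}
    (hv : ⟪∇ r y, v⟫ = 0) :
    ⟪fderiv ℝ (unitNormal r) y u, v⟫ = ‖∇ r y‖⁻¹ * Hess r y u v := by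
  have hgrad := differentiableAt_gradient hr
  have hnorm : DifferentiableAt ℝ (fun z => ‖∇ r z‖⁻¹) y :=
    (hgrad.norm ℝ hy).inv (norm_ne_zero_iff.2 hy)
  change ⟪fderiv ℝ (fun z => ‖∇ r z‖⁻¹ • ∇ r z) y u, v⟫ = _
  rw [fderiv_fun_smul hnorm hgrad, hess_eq_inner_fderiv_gradient hgrad]
  simp only [add_apply, smul_apply, ContinuousLinearMap.smulRight_apply, inner_add_left,
    real_inner_smul_left, hv, mul_zero, add_zero]

end UnitNormal

section NearestPoint

variable {X : Type*} [PseudoMetricSpace X] {S : Set X} {p : X}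

/-- `y` is a point of `S` at minimal distance from `x`. -/
def IsNearestPoint (S : Set X) (x y : X) : Prop := y ∈ S ∧ dist x y = infDist x S

theorem exists_isNearestPoint [ProperSpace X] (hS : IsClosed S) (hne : S.Nonempty) (x : X) :
    ∃ y, IsNearestPoint S x y :=
  let ⟨y, hy, hxy⟩ := hS.exists_infDist_eq_dist hne x
  ⟨y, hy, hxy.symm⟩

theorem eventually_forall_isNearestPoint (hp : p ∈ S) {P : X × X → Prop}
    (hP : ∀ᶠ q in 𝓝 (p, p), P q) :
    ∀ᶠ x in 𝓝 p, ∀ y, IsNearestPoint S x y → P (x, y) := by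
  obtain ⟨ε, hε, hball⟩ := Metric.eventually_nhds_iff.1 hP
  filter_upwards [ball_mem_nhds p (half_pos hε)] with x hx y ⟨_, hxy⟩
  rw [mem_ball] at hx
  have hxy_le : dist y x ≤ dist x p := by
    rw [dist_comm, hxy]
    exact infDist_le_dist_of_mem hp
  have hyp : dist y p < ε := by linarith [dist_triangle y x p]
  exact hball (y := (x, y)) (max_lt (by dsimp only; linarith) hyp)

end NearestPoint

section SignedDistance

variable {X : Type*} [PseudoMetricSpace X] {Ω : Set X} {p x : X}

open scoped Classical in
/-- The signed distance to the boundary of `Ω`, negative inside `Ω`. -/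
noncomputable def signedInfDist (Ω : Set X) (x : X) : ℝ :=
  if x ∈ Ω then -infDist x (frontier Ω) else infDist x (frontier Ω)

theorem abs_signedInfDist (Ω : Set X) (x : X) :
    |signedInfDist Ω x| = infDist x (frontier Ω) := by
  rw [signedInfDist]
  split_ifs <;> simp only [abs_neg, abs_of_nonneg infDist_nonneg]

theorem signedInfDist_of_mem_frontier (hp : p ∈ frontier Ω) : signedInfDist Ω p = 0 := by
  rw [← abs_eq_zero, abs_signedInfDist, infDist_zero_of_mem hp]

theorem signedInfDist_eq_of_neg_iff_mem {s : ℝ} (hs : |s| = infDist x (frontier Ω))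
    (hmem : s < 0 ↔ x ∈ Ω) : signedInfDist Ω x = s := by
  rw [signedInfDist, ← hs]
  split_ifs with hx
  · rw [abs_of_neg (hmem.2 hx), neg_neg]
  · exact abs_of_nonneg (not_lt.1 (mt hmem.1 hx))

theorem continuousAt_signedInfDist (hp : p ∈ frontier Ω) : ContinuousAt (signedInfDist Ω) p := by
  rw [ContinuousAt, signedInfDist_of_mem_frontier hp]
  refine squeeze_zero_norm (fun x => (abs_signedInfDist Ω x).le) ?_
  rw [← infDist_zero_of_mem hp]
  exact (continuous_infDist_pt (frontier Ω)).tendsto p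

end SignedDistance

section SublevelSet

theorem eq_zero_of_mem_frontier_sublevel {X : Type*} [TopologicalSpace X] {r : X → ℝ} {p : X}
    (hr : Continuous r) (hp : p ∈ frontier {z | r z < 0}) : r p = 0 :=
  frontier_lt_subset_eq hr continuous_const hp

variable {V : Type*} [NormedAddCommGroup V] [InnerProductSpace ℝ V] [CompleteSpace V]
  {r : V → ℝ} {p x y : V}

theorem mem_frontier_sublevel_of_gradient_ne_zero (hy : r y = 0) (hgrad : ∇ r y ≠ 0) :
    y ∈ frontier {z | r z < 0} := by
  refine ⟨?_, fun hint => (interior_subset hint).ne hy⟩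
  by_contra hcl
  have hmin : IsLocalMin r y := by
    filter_upwards [isClosed_closure.isOpen_compl.mem_nhds hcl] with w hw
    rw [hy]
    exact not_lt.1 fun hlt => hw (subset_closure hlt)
  exact hgrad (by rw [gradient, hmin.fderiv_eq_zero, map_zero])

theorem exists_eq_add_smul_unitNormal (hr : ContDiff ℝ 1 r)
    (hxy : IsNearestPoint (frontier {z | r z < 0}) x y) (hgrad : ∇ r y ≠ 0) :
    ∃ s : ℝ, x = y + s • unitNormal r y := by
  have hry := eq_zero_of_mem_frontier_sublevel hr.continuous hxy.1
  have hmin : IsLocalMinOn (fun z => ‖z - x‖ ^ 2) {z | r z = r y} y := by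
    filter_upwards [mem_nhdsWithin_of_mem_nhds (eventually_gradient_ne_zero hr.contDiffAt hgrad),
      self_mem_nhdsWithin] with z hz hrz
    have hzf := mem_frontier_sublevel_of_gradient_ne_zero (hrz.trans hry) hz
    rw [← dist_eq_norm, ← dist_eq_norm, dist_comm y, dist_comm z, hxy.2]
    exact pow_le_pow_left₀ infDist_nonneg (infDist_le_dist_of_mem hzf) 2
  have hsq : HasStrictFDerivAt (fun z => ‖z - x‖ ^ 2) (2 • innerSL ℝ (y - x)) y :=
    (hasStrictFDerivAt_norm_sq (y - x)).comp y ((hasStrictFDerivAt_id y).sub_const x)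
  obtain ⟨a, b, hab, hmult⟩ := IsLocalExtrOn.exists_multipliers_of_hasStrictFDerivAt_1d
    (Or.inl hmin) (hr.contDiffAt.hasStrictFDerivAt one_ne_zero) hsq
  have hvec : a • ∇ r y + (b * 2) • (y - x) = 0 := by
    refine ext_inner_right ℝ fun v => ?_
    have hv := DFunLike.congr_fun hmult v
    simp only [add_apply, smul_apply, innerSL_apply_apply, zero_apply, smul_eq_mul,
      nsmul_eq_mul, Nat.cast_ofNat] at hv
    rw [inner_add_left, real_inner_smul_left, real_inner_smul_left, inner_gradient_left,
      inner_zero_left]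
    linarith
  have hb : b ≠ 0 := by
    rintro rfl
    have ha : a ≠ 0 := by rintro rfl; exact hab rfl
    rw [zero_mul, zero_smul, add_zero] at hvec
    exact smul_ne_zero ha hgrad hvec
  refine ⟨(b * 2)⁻¹ * a * ‖∇ r y‖, ?_⟩
  rw [mul_smul, unitNormal, NormedSpace.norm_smul_normalize, mul_smul,
    eq_neg_of_add_eq_zero_left hvec, smul_neg, inv_smul_smul₀ (mul_ne_zero hb two_ne_zero),
    neg_sub, add_sub_cancel]

theorem eventually_neg_iff_neg_of_eq_add_smul_unitNormal (hr : ContDiffAt ℝ 1 r p)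
    (hgrad : ∇ r p ≠ 0) :
    ∀ᶠ q : V × V in 𝓝 (p, p), ∀ s : ℝ, r q.2 = 0 → q.1 = q.2 + s • unitNormal r q.2 →
      (s < 0 ↔ r q.1 < 0) := by
  set c := ‖∇ r p‖
  have hc : 0 < c := norm_pos_iff.2 hgrad
  have hlin := (hr.hasStrictFDerivAt one_ne_zero).isLittleO.def (half_pos hc)
  have hslope : ∀ᶠ y in 𝓝 p, c / 2 < fderiv ℝ r p (unitNormal r y) := by
    have hcont : ContinuousAt (fun y => fderiv ℝ r p (unitNormal r y)) p :=
      (fderiv ℝ r p).continuous.continuousAt.comp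
        (contDiffAt_unitNormal (k := 0) (by rwa [zero_add]) hgrad).continuousAt
    refine hcont.eventually_const_lt ?_
    change c / 2 < fderiv ℝ r p (unitNormal r p)
    rw [← inner_gradient_left, inner_gradient_eq_norm_mul_inner_unitNormal,
      real_inner_self_eq_norm_sq, norm_unitNormal hgrad, one_pow, mul_one]
    exact half_lt_self hc
  have htends : Tendsto Prod.snd (𝓝 (p, p)) (𝓝 p) := continuousAt_snd
  filter_upwards [hlin, htends.eventually hslope,
    htends.eventually (eventually_gradient_ne_zero hr hgrad)] with q hq hm hgq s hrq hqs
  rw [sub_eq_of_eq_add' hqs, hrq, sub_zero, map_smul, norm_smul, norm_unitNormal hgq, mul_one,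
    smul_eq_mul, Real.norm_eq_abs, Real.norm_eq_abs, abs_le] at hq
  constructor
  · intro hs
    rw [abs_of_neg hs] at hq
    nlinarith
  · contrapose!
    intro hs
    rw [abs_of_nonneg hs] at hq
    nlinarith

theorem eventually_eq_add_signedInfDist_smul_unitNormal (hr : ContDiff ℝ 1 r)
    (hp : p ∈ frontier {z | r z < 0}) (hgrad : ∇ r p ≠ 0) :
    ∀ᶠ x in 𝓝 p, ∀ y, IsNearestPoint (frontier {z | r z < 0}) x y →
      x = y + signedInfDist {z | r z < 0} x • unitNormal r y := by
  have hsign := eventually_neg_iff_neg_of_eq_add_smul_unitNormal hr.contDiffAt hgrad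
  have hne : ∀ᶠ q : V × V in 𝓝 (p, p), ∇ r q.2 ≠ 0 :=
    continuousAt_snd.eventually (eventually_gradient_ne_zero hr.contDiffAt hgrad)
  filter_upwards [eventually_forall_isNearestPoint hp (hsign.and hne)] with x hx y hxy
  obtain ⟨hneg_iff, hgy⟩ := hx y hxy
  obtain ⟨s, hs⟩ := exists_eq_add_smul_unitNormal hr hxy hgy
  have habs : |s| = infDist x (frontier {z | r z < 0}) := by
    rw [← hxy.2, dist_eq_norm, sub_eq_of_eq_add' hs, norm_smul, norm_unitNormal hgy, mul_one,
      Real.norm_eq_abs]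
  rwa [signedInfDist_eq_of_neg_iff_mem habs
    (hneg_iff s (eq_zero_of_mem_frontier_sublevel hr.continuous hxy.1) hs)]

end SublevelSet

section NormalCoordinates

theorem exists_contDiffAt_local_left_inverse {𝕜 X Y : Type*} [RCLike 𝕜] [NormedAddCommGroup X]
    [NormedSpace 𝕜 X] [CompleteSpace X] [NormedAddCommGroup Y] [NormedSpace 𝕜 Y] {f : X → Y} {a : X}
    {f' : X ≃L[𝕜] Y} {k : WithTop ℕ∞} (hk : k ≠ 0) (hf : ∀ᶠ w in 𝓝 a, ContDiffAt 𝕜 k f w)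
    (hf' : HasFDerivAt f (f' : X →L[𝕜] Y) a) :
    ∃ g : Y → X, (∀ᶠ z in 𝓝 (f a), ContDiffAt 𝕜 k g z) ∧ ∀ᶠ w in 𝓝 a, g (f w) = w := by
  have hfa := hf.self_of_nhds
  set φ := hfa.toOpenPartialHomeomorph f hf' hk
  have ha : a ∈ φ.source := hfa.mem_toOpenPartialHomeomorph_source hf' hk
  have hfa_mem : f a ∈ φ.target := φ.map_source ha
  have hinvertible : ∀ᶠ w in 𝓝 a, fderiv 𝕜 f w ∈ range ((↑) : (X ≃L[𝕜] Y) → X →L[𝕜] Y) := by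
    have hcont : ContinuousAt (fderiv 𝕜 f) a :=
      (hfa.fderiv_right (m := 0) (by rwa [zero_add, ENat.one_le_iff_ne_zero_withTop])).continuousAt
    refine hcont.eventually ?_
    rw [hf'.fderiv]
    exact ContinuousLinearEquiv.nhds f'
  have hsymm : Tendsto φ.symm (𝓝 (f a)) (𝓝 a) := by
    have hcont := φ.continuousAt_symm hfa_mem
    rwa [ContinuousAt, show φ.symm (f a) = a from φ.left_inv ha] at hcont
  refine ⟨φ.symm, ?_, ?_⟩
  · filter_upwards [φ.open_target.mem_nhds hfa_mem, hsymm.eventually hinvertible,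
      hsymm.eventually hf] with z hz ⟨L, hL⟩ hfz
    refine φ.contDiffAt_symm (f₀' := L) hz ?_ hfz
    rw [hL]
    exact (hfz.differentiableAt hk).hasFDerivAt
  · filter_upwards [φ.open_source.mem_nhds ha] with w hw using φ.left_inv hw

variable {V : Type*} [NormedAddCommGroup V] [InnerProductSpace ℝ V]

/-- The linear automorphism `(v, s) ↦ (v + s N, c ⟪N, v⟫)` of `V × ℝ`, for a unit vector `N` and
`c ≠ 0`; it is the derivative of `normalMap` at a point of the hypersurface. -/
noncomputable def normalMapDeriv {N : V} (hN : ‖N‖ = 1) {c : ℝ} (hc : c ≠ 0) :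
    (V × ℝ) ≃L[ℝ] V × ℝ :=
  let fst := ContinuousLinearMap.fst ℝ V ℝ
  let snd := ContinuousLinearMap.snd ℝ V ℝ
  ContinuousLinearEquiv.equivOfInverse
    ((fst + snd.smulRight N).prod (c • innerSL ℝ N ∘L fst))
    ((fst - (innerSL ℝ N ∘L fst - c⁻¹ • snd).smulRight N).prod (innerSL ℝ N ∘L fst - c⁻¹ • snd))
    (fun ⟨v, s⟩ => by
      simp [fst, snd, inner_add_right, real_inner_smul_right, hN, inv_mul_cancel_left₀ hc])
    (fun ⟨v, s⟩ => by
      simp [fst, snd, inner_sub_right, real_inner_smul_right, hN, mul_inv_cancel_left₀ hc])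

variable [CompleteSpace V] {r : V → ℝ} {p : V} {k : WithTop ℕ∞}

/-- The map `(y, t) ↦ (y + t N(y), r(y))`. A point `x` has normal coordinates `(y, t)` relative to
the hypersurface `r = 0` exactly when `(y, t)` is mapped to `(x, 0)`; keeping `r(y)` as a second
component allows `y` to vary in all of `V` rather than on the hypersurface. -/
noncomputable def normalMap (r : V → ℝ) (q : V × ℝ) : V × ℝ :=
  (q.1 + q.2 • unitNormal r q.1, r q.1)

theorem contDiffAt_normalMap {q : V × ℝ} (hr : ContDiffAt ℝ (k + 1) r q.1) (hq : ∇ r q.1 ≠ 0) :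
    ContDiffAt ℝ k (normalMap r) q :=
  have hN : ContDiffAt ℝ k (fun q : V × ℝ => unitNormal r q.1) q :=
    (contDiffAt_unitNormal hr hq).comp q contDiffAt_fst
  (contDiffAt_fst.add (contDiffAt_snd.smul hN)).prodMk
    ((hr.of_le le_self_add).comp q contDiffAt_fst)

theorem hasFDerivAt_normalMap (hr : ContDiffAt ℝ 2 r p) (hp : ∇ r p ≠ 0) :
    HasFDerivAt (normalMap r)
      (normalMapDeriv (norm_unitNormal hp) (norm_ne_zero_iff.2 hp) : (V × ℝ) →L[ℝ] V × ℝ)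
      (p, 0) := by
  have hN_fst := HasFDerivAt.comp (p, (0 : ℝ)) (f := Prod.fst)
    (differentiableAt_unitNormal hr hp).hasFDerivAt hasFDerivAt_fst
  have hr_fst := HasFDerivAt.comp (p, (0 : ℝ)) (f := Prod.fst)
    (hr.differentiableAt two_ne_zero).hasFDerivAt hasFDerivAt_fst
  have hmap := (hasFDerivAt_fst.add (hasFDerivAt_snd.smul hN_fst)).prodMk hr_fst
  refine hmap.congr_fderiv ?_
  ext v <;>
    simp [normalMapDeriv, ← inner_gradient_left, inner_gradient_eq_norm_mul_inner_unitNormal r p]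

theorem exists_contDiffAt_normalCoordinates (hk : 1 ≤ k) (hr : ContDiff ℝ (k + 1) r)
    (hrp : r p = 0) (hp : ∇ r p ≠ 0) :
    ∃ w : V → V × ℝ, (∀ᶠ x in 𝓝 p, ContDiffAt ℝ k w x) ∧
      ∀ᶠ q : V × ℝ in 𝓝 (p, 0), r q.1 = 0 → w (q.1 + q.2 • unitNormal r q.1) = q := by
  have hr2 : ContDiff ℝ 2 r := hr.of_le (one_add_one_eq_two.ge.trans (by gcongr))
  have hsmooth : ∀ᶠ q : V × ℝ in 𝓝 (p, 0), ContDiffAt ℝ k (normalMap r) q := by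
    have hne := eventually_gradient_ne_zero (hr2.contDiffAt.of_le one_le_two) hp
    filter_upwards [(show Tendsto Prod.fst (𝓝 (p, (0 : ℝ))) (𝓝 p) from
      continuousAt_fst).eventually hne] with q hq using contDiffAt_normalMap hr.contDiffAt hq
  obtain ⟨g, hg, hleft⟩ := exists_contDiffAt_local_left_inverse (one_pos.trans_le hk).ne' hsmooth
    (hasFDerivAt_normalMap hr2.contDiffAt hp)
  rw [show normalMap r (p, 0) = (p, 0) by rw [normalMap, zero_smul, add_zero, hrp]] at hg
  have hembed : ContDiff ℝ k (fun x : V => (x, (0 : ℝ))) := contDiff_id.prodMk contDiff_const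
  refine ⟨fun x => g (x, 0), ?_, ?_⟩
  · filter_upwards [hembed.continuous.continuousAt.eventually hg] with x hx
    exact hx.comp x hembed.contDiffAt
  · filter_upwards [hleft] with q hq hrq
    rwa [normalMap, hrq] at hq

end NormalCoordinates

section DistanceGradient

variable {V : Type*} [NormedAddCommGroup V] [InnerProductSpace ℝ V]

theorem gradient_eq_of_eventually_eq_add_smul [CompleteSpace V] {δ : V → ℝ} {b ν : V → V} {x : V}
    (hb : DifferentiableAt ℝ b x) (hδ : DifferentiableAt ℝ δ x) (hν : DifferentiableAt ℝ ν x)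
    (hdecomp : ∀ᶠ z in 𝓝 x, z = b z + δ z • ν z) (hunit : ∀ᶠ z in 𝓝 x, ‖ν z‖ = 1)
    (hperp : ∀ ξ, ⟪fderiv ℝ b x ξ, ν x⟫ = 0) : ∇ δ x = ν x := by
  refine ext_inner_right ℝ fun ξ => ?_
  have hderiv : ξ = fderiv ℝ b x ξ + (δ x • fderiv ℝ ν x ξ + fderiv ℝ δ x ξ • ν x) :=
    DFunLike.congr_fun ((hasFDerivAt_id x).unique ((hb.hasFDerivAt.add
      (hδ.hasFDerivAt.smul hν.hasFDerivAt)).congr_of_eventuallyEq hdecomp)) ξ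
  have hinner := congrArg (fun v => ⟪v, ν x⟫) hderiv
  simp only [inner_add_left, real_inner_smul_left, hperp ξ,
    inner_fderiv_self_of_norm_eq_one hν hunit ξ, real_inner_self_eq_norm_sq,
    hunit.self_of_nhds] at hinner
  rw [inner_gradient_left, real_inner_comm, hinner]
  ring

theorem gradient_eq_unitNormal_of_eventually_eq_add_smul [CompleteSpace V] {r δ : V → ℝ}
    {b : V → V} {x : V}
    (hb : DifferentiableAt ℝ b x) (hδ : DifferentiableAt ℝ δ x) (hr : ContDiffAt ℝ 2 r (b x))
    (hgrad : ∇ r (b x) ≠ 0) (hlevel : ∀ᶠ z in 𝓝 x, r (b z) = 0)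
    (hdecomp : ∀ᶠ z in 𝓝 x, z = b z + δ z • unitNormal r (b z)) :
    ∇ δ x = unitNormal r (b x) := by
  have hN := differentiableAt_unitNormal hr hgrad
  refine gradient_eq_of_eventually_eq_add_smul hb hδ (hN.comp x hb) hdecomp ?_ fun ξ => ?_
  · have hne := eventually_gradient_ne_zero (hr.of_le one_le_two) hgrad
    exact (hb.continuousAt.eventually hne).mono fun z hz => norm_unitNormal hz
  · have hchain := (hr.differentiableAt two_ne_zero).hasFDerivAt.comp x hb.hasFDerivAt
    have hzero : fderiv ℝ r (b x) (fderiv ℝ b x ξ) = 0 :=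
      DFunLike.congr_fun
        (hchain.unique ((hasFDerivAt_const (0 : ℝ) x).congr_of_eventuallyEq hlevel)) ξ
    rw [← inner_gradient_left, inner_gradient_eq_norm_mul_inner_unitNormal] at hzero
    rw [real_inner_comm]
    exact (mul_eq_zero.1 hzero).resolve_left (norm_ne_zero_iff.2 hgrad)

/-- The behaviour of a point `x` close to the hypersurface `r = 0` bounding `{r < 0}`: the signed
distance is `C^m` at `x`, its foot point at `x` is the unique nearest boundary point, and its
gradient at `x` is the unit normal there. -/
structure IsTubularPoint [CompleteSpace V] (m : WithTop ℕ∞) (r : V → ℝ) (x : V) : Prop where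
  contDiffAt_signedInfDist : ContDiffAt ℝ m (signedInfDist {z | r z < 0}) x
  isNearestPoint_iff : ∀ y, IsNearestPoint (frontier {z | r z < 0}) x y ↔
    y = footPoint (signedInfDist {z | r z < 0}) x
  gradient_signedInfDist : ∇ (signedInfDist {z | r z < 0}) x =
    unitNormal r (footPoint (signedInfDist {z | r z < 0}) x)

theorem IsTubularPoint.footPoint_mem_frontier [CompleteSpace V] {m : WithTop ℕ∞} {r : V → ℝ}
    {x : V} (hx : IsTubularPoint m r x) :
    footPoint (signedInfDist {z | r z < 0}) x ∈ frontier {z | r z < 0} :=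
  ((hx.isNearestPoint_iff _).2 rfl).1

variable [FiniteDimensional ℝ V] {r : V → ℝ} {p : V} {k : WithTop ℕ∞}

theorem exists_contDiffAt_nearestPoint (hk : 1 ≤ k) (hr : ContDiff ℝ (k + 1) r)
    (hp : p ∈ frontier {z | r z < 0}) (hgrad : ∇ r p ≠ 0) :
    ∃ b : V → V, ∀ᶠ x in 𝓝 p, ContDiffAt ℝ k b x ∧ ContDiffAt ℝ k (signedInfDist {z | r z < 0}) x ∧
      ∀ y, IsNearestPoint (frontier {z | r z < 0}) x y ↔ y = b x := by
  set δ := signedInfDist {z | r z < 0}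
  have hr1 : ContDiff ℝ 1 r := hr.of_le le_add_self
  obtain ⟨w, hw, hcoord⟩ := exists_contDiffAt_normalCoordinates hk hr
    (eq_zero_of_mem_frontier_sublevel hr.continuous hp) hgrad
  have hnear : ∀ᶠ x in 𝓝 p, ∀ y, IsNearestPoint (frontier {z | r z < 0}) x y → w x = (y, δ x) := by
    have htends : Tendsto (fun q : V × V => (q.2, δ q.1)) (𝓝 (p, p)) (𝓝 (p, 0)) := by
      rw [← signedInfDist_of_mem_frontier hp]
      exact continuousAt_snd.prodMk
        (ContinuousAt.comp_of_eq (continuousAt_signedInfDist hp) continuousAt_fst rfl)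
    filter_upwards [eventually_forall_isNearestPoint hp (htends.eventually hcoord),
      eventually_eq_add_signedInfDist_smul_unitNormal hr1 hp hgrad] with x hx hdecomp y hxy
    have hwx := hx y hxy (eq_zero_of_mem_frontier_sublevel hr.continuous hxy.1)
    rwa [← hdecomp y hxy] at hwx
  have hexists := exists_isNearestPoint isClosed_frontier ⟨p, hp⟩
  have hδ : ∀ᶠ x in 𝓝 p, δ x = (w x).2 := by
    filter_upwards [hnear] with x hx
    obtain ⟨y, hxy⟩ := hexists x
    rw [hx y hxy]
  refine ⟨fun x => (w x).1, ?_⟩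
  filter_upwards [hw, hnear, hδ.eventually_nhds] with x hwx hx hδx
  refine ⟨contDiffAt_fst.comp x hwx, (contDiffAt_snd.comp x hwx).congr_of_eventuallyEq hδx,
    fun y => ⟨fun hxy => by rw [hx y hxy], ?_⟩⟩
  rintro rfl
  obtain ⟨y, hxy⟩ := hexists x
  rwa [hx y hxy]

theorem eventually_isTubularPoint (hk : 1 ≤ k) (hr : ContDiff ℝ (k + 1) r)
    (hgrad : ∀ p ∈ frontier {z | r z < 0}, ∇ r p ≠ 0) (hp : p ∈ frontier {z | r z < 0}) :
    ∀ᶠ x in 𝓝 p, IsTubularPoint (k + 1) r x := by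
  set δ := signedInfDist {z | r z < 0}
  have hk0 : k ≠ 0 := (one_pos.trans_le hk).ne'
  have hr2 : ContDiff ℝ 2 r := hr.of_le (one_add_one_eq_two.ge.trans (by gcongr))
  obtain ⟨b, hb⟩ := exists_contDiffAt_nearestPoint hk hr hp (hgrad p hp)
  have hdecomp : ∀ᶠ x in 𝓝 p, x = b x + δ x • unitNormal r (b x) := by
    filter_upwards [hb, eventually_eq_add_signedInfDist_smul_unitNormal (hr.of_le le_add_self) hp
      (hgrad p hp)] with x ⟨_, _, hnear⟩ hx using hx (b x) ((hnear _).2 rfl)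
  have hgradδ : ∀ᶠ x in 𝓝 p, ∇ δ x = unitNormal r (b x) := by
    filter_upwards [hb.eventually_nhds, hdecomp.eventually_nhds] with x hbx hx
    obtain ⟨hb_smooth, hδ_smooth, hnear⟩ := hbx.self_of_nhds
    have hlevel : ∀ᶠ z in 𝓝 x, r (b z) = 0 := hbx.mono fun z ⟨_, _, hz⟩ =>
      eq_zero_of_mem_frontier_sublevel hr.continuous ((hz _).2 rfl).1
    exact gradient_eq_unitNormal_of_eventually_eq_add_smul (hb_smooth.differentiableAt hk0)
      (hδ_smooth.differentiableAt hk0) hr2.contDiffAt (hgrad _ ((hnear _).2 rfl).1) hlevel hx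
  filter_upwards [hb.eventually_nhds, hdecomp, hgradδ.eventually_nhds] with x hbx hx hgx
  obtain ⟨hb_smooth, hδ_smooth, hnear⟩ := hbx.self_of_nhds
  have hfoot : footPoint δ x = b x := by
    rw [footPoint, hgx.self_of_nhds, sub_eq_iff_eq_add]
    exact hx
  have hgradδ_smooth : ContDiffAt ℝ k (∇ δ) x :=
    ((contDiffAt_unitNormal hr.contDiffAt (hgrad _ ((hnear _).2 rfl).1)).comp x
      hb_smooth).congr_of_eventuallyEq hgx
  refine ⟨contDiffAt_add_one_of_gradient hδ_smooth
    (hbx.mono fun z ⟨_, hz, _⟩ => hz.differentiableAt hk0) hgradδ_smooth, ?_, ?_⟩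
  · rwa [hfoot]
  · rw [hfoot, hgx.self_of_nhds]

end DistanceGradient

section Hessian

variable {V : Type*} [NormedAddCommGroup V] [InnerProductSpace ℝ V]

theorem half_hess_footPoint_le_hess [CompleteSpace V] {δ : V → ℝ} {x : V}
    (hx : ContDiffAt ℝ 2 δ x) (hfoot : ContDiffAt ℝ 2 δ (footPoint δ x))
    (hunit : ∀ᶠ z in 𝓝 (footPoint δ x), ‖∇ δ z‖ = 1)
    (hcomp : ∀ᶠ z in 𝓝 x, ∇ δ z = ∇ δ (footPoint δ z))
    (hpos : (fderiv ℝ (∇ δ) (footPoint δ x)).IsPositive)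
    (hsmall : |δ x| * ‖fderiv ℝ (∇ δ) (footPoint δ x)‖ ≤ 1) (ξ : V) :
    1 / 2 * Hess δ (footPoint δ x) ξ ξ ≤ Hess δ x ξ ξ := by
  rw [hess_eq_inner_fderiv_gradient (differentiableAt_gradient hx),
    hess_eq_inner_fderiv_gradient (differentiableAt_gradient hfoot)]
  exact half_inner_le_inner_of_add_smul_comp_eq hpos hsmall
    (fderiv_gradient_add_smul_comp_eq hx hfoot hunit hcomp) ξ

theorem eventually_norm_gradient_eq_one_of_comp_footPoint [CompleteSpace V] {r δ : V → ℝ} {q : V}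
    (hδ : ContDiffAt ℝ 2 δ q) (hδq : δ q = 0) (hr : ContDiffAt ℝ 1 r q) (hgrad : ∇ r q ≠ 0)
    (hcomp : ∀ᶠ z in 𝓝 q, ∇ δ z = unitNormal r (footPoint δ z)) :
    ∀ᶠ z in 𝓝 q, ‖∇ δ z‖ = 1 := by
  have htends : Tendsto (footPoint δ) (𝓝 q) (𝓝 q) := by
    have hcont := (hasFDerivAt_footPoint (hδ.differentiableAt two_ne_zero)
      (differentiableAt_gradient hδ)).continuousAt
    rwa [ContinuousAt, footPoint_of_eq_zero hδq] at hcont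
  filter_upwards [hcomp, htends.eventually (eventually_gradient_ne_zero hr hgrad)] with z hz hne
  rw [hz, norm_unitNormal hne]

theorem isPositive_fderiv_gradient_of_comp_footPoint [CompleteSpace V] {r δ : V → ℝ} {q : V}
    (hδ : ContDiffAt ℝ 2 δ q) (hδq : δ q = 0) (hr : ContDiffAt ℝ 2 r q) (hgrad : ∇ r q ≠ 0)
    (hcomp : ∀ᶠ z in 𝓝 q, ∇ δ z = unitNormal r (footPoint δ z))
    (hconv : ∀ τ, ⟪∇ r q, τ⟫ = 0 → 0 ≤ Hess r q τ τ) : (fderiv ℝ (∇ δ) q).IsPositive := by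
  have hfoot : footPoint δ q = q := footPoint_of_eq_zero hδq
  have hN : ∇ δ q = unitNormal r q := by rw [hcomp.self_of_nhds, hfoot]
  have hdiff := differentiableAt_gradient hδ
  have hN_diff : DifferentiableAt ℝ (unitNormal r) (footPoint δ q) := by
    rw [hfoot]
    exact differentiableAt_unitNormal hr hgrad
  have hunit := eventually_norm_gradient_eq_one_of_comp_footPoint hδ hδq (hr.of_le one_le_two)
    hgrad hcomp
  refine ⟨isSymmetric_fderiv_gradient hδ, fun ξ => ?_⟩
  set τ := ξ - ⟪∇ δ q, ξ⟫ • ∇ δ q with hτ_def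
  have hτ : ⟪∇ r q, τ⟫ = 0 := by
    rw [inner_gradient_eq_norm_mul_inner_unitNormal, ← hN, inner_sub_right, real_inner_smul_right,
      real_inner_self_eq_norm_sq, hunit.self_of_nhds]
    ring
  have hBξ : fderiv ℝ (∇ δ) q ξ = fderiv ℝ (unitNormal r) q τ := by
    rw [fderiv_gradient_eq_of_comp_footPoint (hδ.differentiableAt two_ne_zero) hdiff hN_diff hcomp,
      hfoot, hδq, zero_smul, zero_add]
  calc (0 : ℝ) ≤ ‖∇ r q‖⁻¹ * Hess r q τ τ :=
        mul_nonneg (inv_nonneg.2 (norm_nonneg _)) (hconv τ hτ)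
    _ = ⟪fderiv ℝ (∇ δ) q ξ, τ⟫ := by rw [← inner_fderiv_unitNormal hr hgrad τ hτ, hBξ]
    _ = ⟪fderiv ℝ (∇ δ) q ξ, ξ⟫ := by
        rw [hτ_def, inner_sub_right, real_inner_smul_right,
          inner_fderiv_self_of_norm_eq_one hdiff hunit, mul_zero, sub_zero]

theorem eventually_abs_mul_norm_fderiv_gradient_footPoint_le_one [CompleteSpace V]
    {δ : V → ℝ} {p : V} (hδ : ContDiffAt ℝ 2 δ p) (hδp : δ p = 0) :
    ∀ᶠ x in 𝓝 p, |δ x| * ‖fderiv ℝ (∇ δ) (footPoint δ x)‖ ≤ 1 := by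
  have hδ_diff := hδ.differentiableAt two_ne_zero
  have hshape : ContinuousAt (fun x => fderiv ℝ (∇ δ) (footPoint δ x)) p := by
    rw [← one_add_one_eq_two] at hδ
    have hcont : ContinuousAt (fderiv ℝ (∇ δ)) p :=
      ((contDiffAt_gradient hδ).fderiv_right (m := 0) (zero_add 1).le).continuousAt
    have hgrad := (contDiffAt_gradient hδ).differentiableAt one_ne_zero
    exact hcont.comp_of_eq (hasFDerivAt_footPoint hδ_diff hgrad).continuousAt
      (footPoint_of_eq_zero hδp)
  have hlt : |δ p| * ‖fderiv ℝ (∇ δ) (footPoint δ p)‖ < 1 := by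
    rw [hδp, abs_zero, zero_mul]
    exact one_pos
  exact ((hδ_diff.continuousAt.abs.mul hshape.norm).eventually_lt_const hlt).mono fun _ => le_of_lt

variable [FiniteDimensional ℝ V] {r : V → ℝ} {p : V} {k : WithTop ℕ∞}

theorem eventually_gradient_signedInfDist_eq_gradient_footPoint (hk : 1 ≤ k)
    (hr : ContDiff ℝ (k + 1) r) (hgrad : ∀ p ∈ frontier {z | r z < 0}, ∇ r p ≠ 0)
    (hp : p ∈ frontier {z | r z < 0}) :
    ∀ᶠ x in 𝓝 p, ∇ (signedInfDist {z | r z < 0}) x =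
      ∇ (signedInfDist {z | r z < 0}) (footPoint (signedInfDist {z | r z < 0}) x) := by
  filter_upwards [eventually_isTubularPoint hk hr hgrad hp] with x hx
  have hq := hx.footPoint_mem_frontier
  have hfoot := (eventually_isTubularPoint hk hr hgrad hq).self_of_nhds
  rw [hx.gradient_signedInfDist, hfoot.gradient_signedInfDist,
    footPoint_of_eq_zero (signedInfDist_of_mem_frontier hq)]

theorem eventually_half_hess_signedInfDist_le (hk : 1 ≤ k) (hr : ContDiff ℝ (k + 1) r)
    (hgrad : ∀ p ∈ frontier {z | r z < 0}, ∇ r p ≠ 0)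
    (hconv : ∀ p ∈ frontier {z | r z < 0}, ∀ τ, ⟪∇ r p, τ⟫ = 0 → 0 ≤ Hess r p τ τ)
    (hp : p ∈ frontier {z | r z < 0}) :
    ∀ᶠ x in 𝓝 p, ContDiffAt ℝ (k + 1) (signedInfDist {z | r z < 0}) x ∧
      (∀ ξ, 0 ≤ Hess (signedInfDist {z | r z < 0}) x ξ ξ) ∧
      ∀ y, IsNearestPoint (frontier {z | r z < 0}) x y → ∀ ξ,
        1 / 2 * Hess (signedInfDist {z | r z < 0}) y ξ ξ ≤
          Hess (signedInfDist {z | r z < 0}) x ξ ξ := by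
  set δ := signedInfDist {z | r z < 0}
  have hk2 : 2 ≤ k + 1 := one_add_one_eq_two.ge.trans (by gcongr)
  have htube := fun q hq => eventually_isTubularPoint hk hr hgrad (p := q) hq
  have hδ_smooth : ∀ q ∈ frontier {z | r z < 0}, ContDiffAt ℝ 2 δ q := fun q hq =>
    (htube q hq).self_of_nhds.contDiffAt_signedInfDist.of_le hk2
  have hcomp := eventually_gradient_signedInfDist_eq_gradient_footPoint hk hr hgrad hp
  have hsmall := eventually_abs_mul_norm_fderiv_gradient_footPoint_le_one (hδ_smooth p hp)
    (signedInfDist_of_mem_frontier hp)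
  filter_upwards [htube p hp, hcomp.eventually_nhds, hsmall] with x hx hcompx hsmallx
  set q := footPoint δ x
  have hq : q ∈ frontier {z | r z < 0} := hx.footPoint_mem_frontier
  have hδq := hδ_smooth q hq
  have hgradq := (htube q hq).mono fun z hz => hz.gradient_signedInfDist
  have hpos : (fderiv ℝ (∇ δ) q).IsPositive :=
    isPositive_fderiv_gradient_of_comp_footPoint hδq (signedInfDist_of_mem_frontier hq)
      (hr.contDiffAt.of_le hk2) (hgrad q hq) hgradq (hconv q hq)
  have hunit : ∀ᶠ z in 𝓝 q, ‖∇ δ z‖ = 1 :=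
    eventually_norm_gradient_eq_one_of_comp_footPoint hδq (signedInfDist_of_mem_frontier hq)
      (hr.contDiffAt.of_le le_add_self) (hgrad q hq) hgradq
  have hhalf := half_hess_footPoint_le_hess (hx.contDiffAt_signedInfDist.of_le hk2) hδq hunit
    hcompx hpos hsmallx
  refine ⟨hx.contDiffAt_signedInfDist,
    fun ξ => (mul_nonneg one_half_pos.le ?_).trans (hhalf ξ), fun y hy => ?_⟩
  · rw [hess_eq_inner_fderiv_gradient (differentiableAt_gradient hδq)]
    exact hpos.inner_nonneg_left ξ
  · rwa [(hx.isNearestPoint_iff y).1 hy]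

theorem signed_distance_convex_general (hk : 1 ≤ k) (hr : ContDiff ℝ (k + 1) r)
    (hgrad : ∀ p ∈ frontier {z | r z < 0}, ∇ r p ≠ 0)
    (hconv : ∀ p ∈ frontier {z | r z < 0}, ∀ τ, ⟪∇ r p, τ⟫ = 0 → 0 ≤ Hess r p τ τ) :
    ∃ U : Set V, IsOpen U ∧ frontier {z | r z < 0} ⊆ U ∧
      ContDiffOn ℝ (k + 1) (signedInfDist {z | r z < 0}) U ∧
      (∀ x ∈ U, ∀ ξ, 0 ≤ Hess (signedInfDist {z | r z < 0}) x ξ ξ) ∧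
      ∀ x ∈ U, ∀ y, IsNearestPoint (frontier {z | r z < 0}) x y → ∀ ξ,
        1 / 2 * Hess (signedInfDist {z | r z < 0}) y ξ ξ ≤
          Hess (signedInfDist {z | r z < 0}) x ξ ξ := by
  have hnear := fun p hp => mem_interior_iff_mem_nhds.2
    (eventually_half_hess_signedInfDist_le hk hr hgrad hconv (p := p) hp)
  exact ⟨_, isOpen_interior, hnear,
    fun x hx => (interior_subset hx).1.contDiffWithinAt,
    fun x hx => (interior_subset hx).2.1, fun x hx => (interior_subset hx).2.2⟩

end Hessian

open scoped Classical in
/-- the signed distance function of a smoothly bounded convex domain is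
convex on a neighborhood of the boundary; moreover outside the closure one has
`H_δ(ξ,ξ)(x) ≥ (1/2)·H_δ(ξ,ξ)(b(x))` for the nearest boundary point `b(x)`. -/
theorem signed_distance_convex
    {n : ℕ} (Ω : Set (E n)) (hΩ : IsOpen Ω) (hbd : Bornology.IsBounded Ω)
    (r : E n → ℝ) (hr : ContDiff ℝ (⊤ : ℕ∞) r) (hdef : Ω = {x | r x < 0})
    (hgrad : ∀ p ∈ frontier Ω, gradient r p ≠ 0)
    (hconv : ∀ p ∈ frontier Ω, ∀ τ : E n, ⟪gradient r p, τ⟫ = 0 → 0 ≤ Hess r p τ τ)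
    (δ : E n → ℝ)
    (hsd : ∀ x, δ x = if x ∈ Ω then -Metric.infDist x (frontier Ω)
      else Metric.infDist x (frontier Ω)) :
    ∃ U : Set (E n), IsOpen U ∧ frontier Ω ⊆ U ∧ ContDiffOn ℝ (⊤ : ℕ∞) δ U ∧
      (∀ x ∈ U, ∀ ξ : E n, 0 ≤ Hess δ x ξ ξ) ∧
      ∀ x ∈ U, x ∉ closure Ω → ∀ y ∈ frontier Ω,
        dist x y = Metric.infDist x (frontier Ω) →
        ∀ ξ : E n, (1 / 2) * Hess δ y ξ ξ ≤ Hess δ x ξ ξ := by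
  obtain rfl : δ = signedInfDist Ω := funext hsd
  subst hdef
  obtain ⟨U, hU, hsub, hsmooth, hnonneg, hhalf⟩ :=
    signed_distance_convex_general (k := (⊤ : ℕ∞)) (mod_cast le_top) hr hgrad hconv
  exact ⟨U, hU, hsub, hsmooth, hnonneg, fun x hx _ y hy hxy => hhalf x hx y ⟨hy, hxy⟩⟩
end

section
/- Let Ω ⊂ ℝⁿ be a smoothly bounded domain, p ∈ bΩ, and σ a smooth defining function for Ω on a neighborhood U of p with ‖∇σ‖ = 1 on bΩ ∩ U. If Ω is convex on U, then there exist a neighborhood V ⊂ U of p and constants C₁, C₂ > 0 such that H_σ(ξ,ξ)(x) ≥ −C₁σ²(x)‖ξ‖² − C₂|⟨∇σ(x),ξ⟩|²/‖∇σ(x)‖² for all x ∈ V and ξ ∈ ℝⁿ. -/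
open RealInnerProductSpace Metric Bornology

/-!
Move a point `x` near `p` to a boundary point `y = x - s ∇σ(x)`, where `s = O(σ(x))`, and write
`A` for the Hessian operator of `σ`. Differentiating `‖∇σ‖² = 1` along the boundary gives the
eigenvector equation `A ∇σ = κ ∇σ` there, and differentiating this equation once more gives, for
`τ` tangent at `y`, the normal derivative `⟨A'(y)(∇σ) τ, τ⟩ = κ ⟨Aτ, τ⟩ - ‖Aτ‖²`. Since `A` is
nonnegative on the tangent space, `‖Aτ‖² ≤ ‖A‖ ⟨Aτ, τ⟩`, so this derivative is at most a multiple
of `⟨Aτ, τ⟩` in absolute value: the first-order Taylor polynomial of `A` at `y` is still nonnegative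
on tangent vectors, and only the `O(σ²)` remainder can be negative. The eigenvector equation
also makes the mixed terms `⟨A ∇σ(y), τ⟩` at `x` of size `O(σ)`, so that they are absorbed by
`2ab ≤ a² + b²`.
-/

open Filter Topology Asymptotics
open scoped Gradient

section Calculus

variable {F G : Type*} [NormedAddCommGroup F] [NormedSpace ℝ F]
  [NormedAddCommGroup G] [NormedSpace ℝ G]

theorem isBigO_sub_sub_fderiv {f : F → G} {p : F} (hf : ContDiffAt ℝ 2 f p) :
    (fun q : F × F => f q.1 - f q.2 - fderiv ℝ f q.2 (q.1 - q.2)) =O[𝓝 (p, p)]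
      fun q => ‖q.1 - q.2‖ ^ 2 := by
  have hf' : ContDiffAt ℝ 1 (fderiv ℝ f) p := hf.fderiv_right (by norm_num)
  obtain ⟨K, t, ht, hK⟩ := hf'.exists_lipschitzOnWith
  have hdiff : ∀ᶠ z in 𝓝 p, DifferentiableAt ℝ f z :=
    (hf.eventually (by simp)).mono fun z hz => hz.differentiableAt (by simp)
  obtain ⟨r, hr, hball⟩ := Metric.mem_nhds_iff.1 (inter_mem ht hdiff)
  refine IsBigO.of_bound K ?_
  filter_upwards [prod_mem_nhds (ball_mem_nhds p hr) (ball_mem_nhds p hr)]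
  rintro ⟨x, y⟩ ⟨hx, hy⟩
  have hseg : segment ℝ y x ⊆ t ∩ {z | DifferentiableAt ℝ f z} :=
    ((convex_ball p r).segment_subset hy hx).trans hball
  have hbound : ∀ z ∈ segment ℝ y x, ‖fderiv ℝ f z - fderiv ℝ f y‖ ≤ K * ‖x - y‖ := by
    intro z hz
    refine (hK.norm_sub_le (hseg hz).1 (hball hy).1).trans ?_
    gcongr
    exact norm_sub_le_of_mem_segment hz
  have hmean := (convex_segment y x).norm_image_sub_le_of_norm_fderiv_le'
    (fun z hz => (hseg hz).2) hbound (left_mem_segment ℝ y x) (right_mem_segment ℝ y x)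
  simpa [sq, mul_assoc] using hmean

theorem exists_fderiv_eq_smul_of_eventually_const_on_level [CompleteSpace F] {σ f : F → ℝ}
    {σ' f' : F →L[ℝ] ℝ} {y : F} (hσ : HasStrictFDerivAt σ σ' y) (hf : HasStrictFDerivAt f f' y)
    (hσ' : σ' ≠ 0) (hconst : ∀ᶠ z in 𝓝 y, σ z = σ y → f z = f y) : ∃ c : ℝ, f' = c • σ' := by
  have hextr : IsLocalExtrOn f {z | σ z = σ y} y :=
    Or.inl (eventually_nhdsWithin_iff.2 (hconst.mono fun z hz hzy => (hz hzy).ge))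
  obtain ⟨a, b, hab, hlin⟩ := hextr.exists_multipliers_of_hasStrictFDerivAt_1d hσ hf
  have hb : b ≠ 0 := by
    rintro rfl
    rw [zero_smul, add_zero, smul_eq_zero, or_iff_left hσ'] at hlin
    exact hab (by rw [hlin]; rfl)
  refine ⟨-(a / b), ContinuousLinearMap.ext fun v => ?_⟩
  have hv : a * σ' v + b * f' v = 0 := DFunLike.congr_fun hlin v
  rw [smul_apply, smul_eq_mul]
  field_simp
  linarith

theorem tendsto_sub_smul_nhds {N : F → F} {s : F → ℝ} {p : F} (hN : ContinuousAt N p)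
    (hs : Tendsto s (𝓝 p) (𝓝 0)) : Tendsto (fun x => x - s x • N x) (𝓝 p) (𝓝 p) := by
  simpa using tendsto_id.sub (hs.smul hN)

theorem isBigO_smul_of_continuousAt {N : F → F} {s : F → ℝ} {p : F} (hN : ContinuousAt N p) :
    (fun x => s x • N x) =O[𝓝 p] s := by
  simpa using (isBigO_refl s (𝓝 p)).smul (hN.isBigO_one ℝ)

theorem exists_tendsto_apply_sub_smul_eq [CompleteSpace F] {σ : F → ℝ} {N : F → F}
    {σ' : F →L[ℝ] ℝ} {N' : F →L[ℝ] F} {p : F} (hσ : HasStrictFDerivAt σ σ' p)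
    (hN : HasStrictFDerivAt N N' p) (htrans : σ' (N p) ≠ 0) :
    ∃ s : F → ℝ, Tendsto s (𝓝 p) (𝓝 0) ∧ ∀ᶠ x in 𝓝 p, σ (x - s x • N x) = σ p := by
  have hfst : HasStrictFDerivAt (Prod.fst : F × ℝ → F) (.fst ℝ F ℝ) (p, 0) :=
    hasStrictFDerivAt_fst
  have hsnd : HasStrictFDerivAt (Prod.snd : F × ℝ → ℝ) (.snd ℝ F ℝ) (p, 0) :=
    hasStrictFDerivAt_snd
  have hflow : HasStrictFDerivAt (fun q : F × ℝ => q.1 - q.2 • N q.1)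
      (.fst ℝ F ℝ - (ContinuousLinearMap.snd ℝ F ℝ).smulRight (N p)) (p, 0) := by
    simpa using hfst.fun_sub (hsnd.fun_smul (hN.comp (p, (0 : ℝ)) hfst))
  have hσ₀ : HasStrictFDerivAt σ σ' (p - (0 : ℝ) • N p) := by simpa using hσ
  have hΦ := hσ₀.comp (p, (0 : ℝ)) hflow
  have hinv : ((σ' ∘L (.fst ℝ F ℝ - (ContinuousLinearMap.snd ℝ F ℝ).smulRight (N p))) ∘L
      .inr ℝ F ℝ).IsInvertible := by
    refine ⟨.unitsEquivAut ℝ (Units.mk0 (-σ' (N p)) (neg_ne_zero.2 htrans)), ?_⟩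
    ext
    simp
  refine ⟨hΦ.implicitFunctionOfProdDomain hinv, hΦ.tendsto_implicitFunctionOfProdDomain hinv, ?_⟩
  simpa using hΦ.eventually_apply_implicitFunctionOfProdDomain hinv

theorem isBigO_of_apply_sub_smul_eq_zero {σ : F → ℝ} {N : F → F} {σ' : F →L[ℝ] ℝ} {s : F → ℝ}
    {p : F} (hσ : HasStrictFDerivAt σ σ' p) (hN : ContinuousAt N p) (htrans : σ' (N p) ≠ 0)
    (hs : Tendsto s (𝓝 p) (𝓝 0)) (hzero : ∀ᶠ x in 𝓝 p, σ (x - s x • N x) = 0) :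
    s =O[𝓝 p] σ := by
  have hlin : (fun x => σ x - s x * σ' (N x)) =o[𝓝 p] s := by
    have h := hσ.isLittleO.comp_tendsto (tendsto_id.prodMk_nhds (tendsto_sub_smul_nhds hN hs))
    refine IsLittleO.trans_isBigO (h.congr' ?_ ?_) (isBigO_smul_of_continuousAt (s := s) hN)
    · filter_upwards [hzero] with x hx
      simp [hx]
    · exact .of_forall fun x => sub_sub_cancel x _
  have hmain : s =O[𝓝 p] fun x => s x * σ' (N x) := by
    have hinv : Tendsto (fun x => (σ' (N x))⁻¹) (𝓝 p) (𝓝 (σ' (N p))⁻¹) :=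
      ((σ'.continuous.tendsto _).comp hN).inv₀ htrans
    have hne : ∀ᶠ x in 𝓝 p, σ' (N x) ≠ 0 :=
      ((σ'.continuous.tendsto _).comp hN).eventually_ne htrans
    refine ((isBigO_refl (fun x => s x * σ' (N x)) (𝓝 p)).mul (hinv.isBigO_one ℝ)).congr' ?_ ?_
    · filter_upwards [hne] with x hx using mul_inv_cancel_right₀ hx (s x)
    · exact .of_forall fun x => mul_one _
  simpa using hmain.trans (hlin.trans_isBigO hmain).right_isBigO_add

theorem isBigO_sub_apply_sub_smul {f : F → G} {N : F → F} {f' : F →L[ℝ] G} {s : F → ℝ} {p : F}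
    (hf : HasStrictFDerivAt f f' p) (hN : ContinuousAt N p) (hs : Tendsto s (𝓝 p) (𝓝 0)) :
    (fun x => f x - f (x - s x • N x)) =O[𝓝 p] s := by
  have h := hf.isBigO_sub.comp_tendsto (tendsto_id.prodMk_nhds (tendsto_sub_smul_nhds hN hs))
  refine IsBigO.trans (h.congr_right fun x => ?_) (isBigO_smul_of_continuousAt hN)
  exact sub_sub_cancel x _

theorem isBigO_sub_taylor_apply_sub_smul {f : F → G} {N : F → F} {N' : F →L[ℝ] F} {s : F → ℝ}
    {p : F} (hf : ContDiffAt ℝ 2 f p) (hN : HasStrictFDerivAt N N' p)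
    (hs : Tendsto s (𝓝 p) (𝓝 0)) :
    (fun x => f x - (f (x - s x • N x) +
      s x • fderiv ℝ f (x - s x • N x) (N (x - s x • N x)))) =O[𝓝 p] fun x => s x ^ 2 := by
  have hy := tendsto_sub_smul_nhds hN.continuousAt hs
  have htaylor : (fun x => f x - f (x - s x • N x) - fderiv ℝ f (x - s x • N x) (s x • N x))
      =O[𝓝 p] fun x => s x ^ 2 := by
    have h := (isBigO_sub_sub_fderiv hf).comp_tendsto (tendsto_id.prodMk_nhds hy)
    refine IsBigO.trans (h.congr (fun x => ?_) fun x => ?_)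
      ((isBigO_smul_of_continuousAt (s := s) hN.continuousAt).norm_left.pow 2)
    · exact congrArg (fun v => f x - f (x - s x • N x) - fderiv ℝ f (x - s x • N x) v)
        (sub_sub_cancel x _)
    · exact congrArg (fun v => ‖v‖ ^ 2) (sub_sub_cancel x _)
  have hdiff : (fun x => s x • fderiv ℝ f (x - s x • N x) (N x - N (x - s x • N x)))
      =O[𝓝 p] fun x => s x ^ 2 := by
    have hf' : ContinuousAt (fderiv ℝ f) p :=
      (hf.fderiv_right (m := 1) (by norm_num)).continuousAt
    have hbdd : (fun x => ‖fderiv ℝ f (x - s x • N x)‖) =O[𝓝 p] fun _ => (1 : ℝ) :=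
      ((hf'.tendsto.comp hy).isBigO_one ℝ).norm_left
    have happly : (fun x => fderiv ℝ f (x - s x • N x) (N x - N (x - s x • N x))) =O[𝓝 p] s := by
      refine IsBigO.trans (.of_norm_le fun x => (fderiv ℝ f (x - s x • N x)).le_opNorm _) ?_
      simpa using hbdd.mul (isBigO_sub_apply_sub_smul hN hN.continuousAt hs).norm_left
    simpa [sq] using (isBigO_refl s (𝓝 p)).smul happly
  refine (htaylor.add hdiff).congr_left fun x => ?_
  simp only [map_smul, map_sub, smul_sub]
  abel

end Calculus

section QuadraticForm

variable {F : Type*} [NormedAddCommGroup F] [InnerProductSpace ℝ F]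

theorem abs_inner_apply_le_of_opNorm_le {A : F →L[ℝ] F} {c : ℝ} (hA : ‖A‖ ≤ c) (v w : F) :
    |⟪A v, w⟫| ≤ c * ‖v‖ * ‖w‖ :=
  (abs_real_inner_le_norm _ _).trans (by gcongr; exact A.le_of_opNorm_le hA v)

/- Nonnegativity of the form at `‖A‖ • τ - A τ` is a Cauchy–Schwarz inequality for the form,
which is semidefinite on `K` only. -/
theorem norm_apply_sq_le_of_nonneg_on {A : F →L[ℝ] F} {K : Submodule ℝ F} {τ : F}
    (hA : (A : F →ₗ[ℝ] F).IsSymmetric) (hK : ∀ v ∈ K, 0 ≤ ⟪A v, v⟫) (hτ : τ ∈ K)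
    (hAτ : A τ ∈ K) : ‖A τ‖ ^ 2 ≤ ‖A‖ * ⟪A τ, τ⟫ := by
  rcases (norm_nonneg A).eq_or_lt' with hA₀ | hA₀
  · simp [norm_eq_zero.1 hA₀]
  have hnonneg := hK _ (K.sub_mem (K.smul_mem ‖A‖ hτ) hAτ)
  have hAA : ⟪A (A τ), A τ⟫ ≤ ‖A‖ * ‖A τ‖ ^ 2 := by
    simpa [sq, mul_assoc] using
      (le_abs_self _).trans (abs_inner_apply_le_of_opNorm_le le_rfl (A τ) (A τ))
  have hswap : ⟪A (A τ), τ⟫ = ‖A τ‖ ^ 2 := (hA _ _).trans (real_inner_self_eq_norm_sq _)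
  simp only [map_sub, map_smul, inner_sub_left, inner_sub_right, real_inner_smul_left,
    real_inner_smul_right, hswap, real_inner_self_eq_norm_sq] at hnonneg
  refine le_of_mul_le_mul_left ?_ hA₀
  linarith

theorem inner_apply_self_ge_of_blocks {A : F →L[ℝ] F} {u : F} {α β γ : ℝ}
    (hA : (A : F →ₗ[ℝ] F).IsSymmetric) (hu : ‖u‖ = 1) (hα : 0 ≤ α)
    (htan : ∀ τ : F, ⟪u, τ⟫ = 0 → -(α * ‖τ‖ ^ 2) ≤ ⟪A τ, τ⟫)
    (hmix : ∀ τ : F, ⟪u, τ⟫ = 0 → |⟪A u, τ⟫| ≤ β * ‖τ‖) (hnor : -γ ≤ ⟪A u, u⟫) (ξ : F) :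
    -((α + β ^ 2) * ‖ξ‖ ^ 2) - (γ + 1) * ⟪u, ξ⟫ ^ 2 ≤ ⟪A ξ, ξ⟫ := by
  obtain ⟨a, τ, hτ, rfl⟩ : ∃ (a : ℝ) (τ : F), ⟪u, τ⟫ = 0 ∧ ξ = a • u + τ :=
    ⟨⟪u, ξ⟫, ξ - ⟪u, ξ⟫ • u, by simp [inner_sub_right, real_inner_smul_right, hu],
      (add_sub_cancel _ _).symm⟩
  have ha : ⟪u, a • u + τ⟫ = a := by simp [inner_add_right, real_inner_smul_right, hu, hτ]
  have hpyth : ‖a • u + τ‖ ^ 2 = a ^ 2 + ‖τ‖ ^ 2 := by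
    rw [norm_add_sq_real, norm_smul, hu, real_inner_smul_left, hτ, Real.norm_eq_abs, mul_one,
      sq_abs]
    ring
  have hexpand : ⟪A (a • u + τ), a • u + τ⟫ =
      a ^ 2 * ⟪A u, u⟫ + 2 * (a * ⟪A u, τ⟫) + ⟪A τ, τ⟫ := by
    have hswap : ⟪A τ, u⟫ = ⟪A u, τ⟫ := (hA τ u).trans (real_inner_comm _ _)
    simp only [map_add, map_smul, inner_add_left, inner_add_right, real_inner_smul_left,
      real_inner_smul_right, hswap]
    ring
  have hcross : -(a ^ 2 + β ^ 2 * ‖τ‖ ^ 2) ≤ 2 * (a * ⟪A u, τ⟫) := by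
    have hsq : ⟪A u, τ⟫ ^ 2 ≤ (β * ‖τ‖) ^ 2 := sq_le_sq.2 ((hmix τ hτ).trans (le_abs_self _))
    linarith [sq_nonneg (a + ⟪A u, τ⟫)]
  have hnormal : a ^ 2 * -γ ≤ a ^ 2 * ⟪A u, u⟫ := by gcongr
  have hdrop : 0 ≤ (α + β ^ 2) * a ^ 2 := by positivity
  rw [ha, hpyth, hexpand]
  linarith [htan τ hτ]

theorem inner_sq_le_of_norm_sub_le {u v : F} {ε : ℝ} (h : ‖v - u‖ ≤ ε) (ξ : F) :
    ⟪u, ξ⟫ ^ 2 ≤ 2 * ⟪v, ξ⟫ ^ 2 + 2 * (ε ^ 2 * ‖ξ‖ ^ 2) := by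
  have hdiff : ⟪v - u, ξ⟫ ^ 2 ≤ (ε * ‖ξ‖) ^ 2 := by
    refine sq_le_sq.2 (((abs_real_inner_le_norm _ _).trans ?_).trans (le_abs_self _))
    gcongr
  rw [inner_sub_left] at hdiff
  linarith [sq_nonneg (2 * ⟪v, ξ⟫ - ⟪u, ξ⟫)]

theorem inner_sq_le_mul_div_norm_sq {v : F} {k : ℝ} (hv : ‖v‖ ^ 2 ≤ k) (ξ : F) :
    ⟪v, ξ⟫ ^ 2 ≤ k * ⟪v, ξ⟫ ^ 2 / ‖v‖ ^ 2 := by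
  rcases eq_or_ne v 0 with rfl | hv₀
  · simp
  · rw [le_div_iff₀ (by positivity), mul_comm]
    gcongr

/- In the application `A` and `A₀` are the Hessian operators at `x` and at its foot point, and `B`
is the first-order Taylor polynomial of the Hessian operator at the foot point. -/
theorem inner_apply_self_ge_of_norm_sub_le {A A₀ B : F →L[ℝ] F} {u v : F}
    {κ δ a b c d : ℝ} (hA : (A : F →ₗ[ℝ] F).IsSymmetric) (hu : ‖u‖ = 1) (hA₀ : A₀ u = κ • u)
    (hB : ∀ τ : F, ⟪u, τ⟫ = 0 → 0 ≤ ⟪B τ, τ⟫) (hAB : ‖A - B‖ ≤ a * δ ^ 2)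
    (hAA₀ : ‖A - A₀‖ ≤ b * |δ|) (hAc : ‖A‖ ≤ c) (hvu : ‖v - u‖ ≤ d * |δ|) (hv : ‖v‖ ^ 2 ≤ 2)
    (ξ : F) :
    -((a + b ^ 2 + 2 * (c + 1) * d ^ 2) * δ ^ 2 * ‖ξ‖ ^ 2)
      - 4 * (c + 1) * ⟪v, ξ⟫ ^ 2 / ‖v‖ ^ 2 ≤ ⟪A ξ, ξ⟫ := by
  have htan : ∀ τ : F, ⟪u, τ⟫ = 0 → -(a * δ ^ 2 * ‖τ‖ ^ 2) ≤ ⟪A τ, τ⟫ := by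
    intro τ hτ
    have h := (abs_le.1 (abs_inner_apply_le_of_opNorm_le hAB τ τ)).1
    rw [sub_apply, inner_sub_left] at h
    linarith [hB τ hτ]
  have hmix : ∀ τ : F, ⟪u, τ⟫ = 0 → |⟪A u, τ⟫| ≤ b * |δ| * ‖τ‖ := by
    intro τ hτ
    have h := abs_inner_apply_le_of_opNorm_le hAA₀ u τ
    rwa [sub_apply, inner_sub_left, hA₀, real_inner_smul_left, hτ, mul_zero, sub_zero, hu,
      mul_one] at h
  have hnor : -c ≤ ⟪A u, u⟫ := by
    simpa [hu] using (abs_le.1 (abs_inner_apply_le_of_opNorm_le hAc u u)).1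
  have hblocks := inner_apply_self_ge_of_blocks hA hu ((norm_nonneg _).trans hAB) htan hmix hnor ξ
  have hc : 0 ≤ c + 1 := by linarith [(norm_nonneg A).trans hAc]
  have hnormal : (c + 1) * ⟪u, ξ⟫ ^ 2 ≤ (c + 1) *
      (2 * (2 * ⟪v, ξ⟫ ^ 2 / ‖v‖ ^ 2) + 2 * ((d * |δ|) ^ 2 * ‖ξ‖ ^ 2)) := by
    gcongr
    exact (inner_sq_le_of_norm_sub_le hvu ξ).trans
      (by gcongr; exact inner_sq_le_mul_div_norm_sq hv ξ)
  simp only [mul_pow, sq_abs, mul_div_assoc] at hblocks hnormal ⊢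
  linarith

end QuadraticForm

section Hessian

variable {F : Type*} [NormedAddCommGroup F] [InnerProductSpace ℝ F] [CompleteSpace F]
  {σ : F → ℝ} {x y p : F}

/-- The Hessian of `σ` at `x` as an operator: the derivative of the gradient. It represents the
form `Hess σ x` through the inner product. -/
noncomputable def hessianOperator (σ : F → ℝ) (x : F) : F →L[ℝ] F :=
  fderiv ℝ (∇ σ) x

theorem contDiffAt_gradient_s17 {m n : WithTop ℕ∞} (hσ : ContDiffAt ℝ n σ x) (hmn : m + 1 ≤ n) :
    ContDiffAt ℝ m (∇ σ) x :=
  (InnerProductSpace.toDual ℝ F).symm.contDiff.contDiffAt.comp x (hσ.fderiv_right hmn)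

theorem contDiffAt_hessianOperator {m n : WithTop ℕ∞} (hσ : ContDiffAt ℝ n σ x)
    (hmn : m + 2 ≤ n) : ContDiffAt ℝ m (hessianOperator σ) x :=
  (contDiffAt_gradient_s17 hσ (by rwa [add_assoc, one_add_one_eq_two])).fderiv_right le_rfl

theorem hasStrictFDerivAt_gradient (hσ : ContDiffAt ℝ 2 σ x) :
    HasStrictFDerivAt (∇ σ) (hessianOperator σ x) x :=
  (contDiffAt_gradient_s17 hσ (m := 1) (by norm_num)).hasStrictFDerivAt (by simp)

theorem hess_eq_inner_hessianOperator (hσ : ContDiffAt ℝ 2 σ x) (ξ ζ : F) :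
    Hess σ x ξ ζ = ⟪hessianOperator σ x ξ, ζ⟫ := by
  have hgrad : (fun z => fderiv ℝ σ z ζ) = fun z => ⟪∇ σ z, ζ⟫ :=
    funext fun z => inner_gradient_left.symm
  rw [Hess, hgrad, fderiv_inner_apply ℝ (hasStrictFDerivAt_gradient hσ).differentiableAt
    (differentiableAt_const ζ)]
  simp [hessianOperator]

theorem isSymmetric_hessianOperator (hσ : ContDiffAt ℝ 2 σ x) :
    (hessianOperator σ x : F →ₗ[ℝ] F).IsSymmetric := by
  have hdiff : DifferentiableAt ℝ (fderiv ℝ σ) x :=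
    (hσ.fderiv_right (m := 1) (by norm_num)).differentiableAt (by simp)
  have hsecond : ∀ ξ ζ : F, Hess σ x ξ ζ = fderiv ℝ (fderiv ℝ σ) x ξ ζ := fun ξ ζ => by
    rw [Hess, fderiv_clm_apply hdiff (differentiableAt_const ζ)]
    simp
  intro ξ ζ
  have hsymm := hσ.isSymmSndFDerivAt (by simp) ξ ζ
  rw [← hsecond, ← hsecond, hess_eq_inner_hessianOperator hσ,
    hess_eq_inner_hessianOperator hσ] at hsymm
  exact hsymm.trans (real_inner_comm _ _)

theorem hessianOperator_apply_gradient (hσ : ContDiffAt ℝ 2 σ y)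
    (hunit : ∀ᶠ z in 𝓝 y, σ z = σ y → ‖∇ σ z‖ = 1) :
    hessianOperator σ y (∇ σ y) = ⟪hessianOperator σ y (∇ σ y), ∇ σ y⟫ • ∇ σ y := by
  have hy : ‖∇ σ y‖ = 1 := hunit.self_of_nhds rfl
  have hσ' : fderiv ℝ σ y ≠ 0 := fun h => by simp [gradient, h] at hy
  have hN := hasStrictFDerivAt_gradient hσ
  obtain ⟨c, hc⟩ := exists_fderiv_eq_smul_of_eventually_const_on_level
    (hσ.hasStrictFDerivAt (by simp)) (hN.inner ℝ hN) hσ' (by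
      filter_upwards [hunit] with z hz hzy
      simp only [real_inner_self_eq_norm_sq, hz hzy, hy])
  have heig : hessianOperator σ y (∇ σ y) = (c / 2) • ∇ σ y := by
    refine ext_inner_right ℝ fun v => ?_
    have hv : ⟪∇ σ y, hessianOperator σ y v⟫ + ⟪hessianOperator σ y v, ∇ σ y⟫ =
        c * ⟪∇ σ y, v⟫ := by
      rw [inner_gradient_left (x := y) (y := v)]
      exact DFunLike.congr_fun hc v
    rw [real_inner_comm (∇ σ y)] at hv
    have hswap : ⟪hessianOperator σ y (∇ σ y), v⟫ = ⟪∇ σ y, hessianOperator σ y v⟫ :=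
      isSymmetric_hessianOperator hσ _ _
    rw [hswap, real_inner_smul_left]
    linarith
  rw [heig, real_inner_smul_left, real_inner_self_eq_norm_sq, hy, one_pow, mul_one]

/- Differentiate the eigenvector equation `D²σ(∇σ) = κ ∇σ` along a tangent direction `τ`, pair the
result with `τ`, and use the symmetry of the third derivative. -/
theorem inner_fderiv_hessianOperator_gradient {τ : F} (hσ : ContDiffAt ℝ 3 σ y)
    (hunit : ∀ᶠ z in 𝓝 y, σ z = σ y → ‖∇ σ z‖ = 1) (hτ : ⟪∇ σ y, τ⟫ = 0) :
    ⟪fderiv ℝ (hessianOperator σ) y (∇ σ y) τ, τ⟫ =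
      ⟪hessianOperator σ y (∇ σ y), ∇ σ y⟫ * ⟪hessianOperator σ y τ, τ⟫
        - ‖hessianOperator σ y τ‖ ^ 2 := by
  have hσ₂ : ContDiffAt ℝ 2 σ y := hσ.of_le (by norm_num)
  have hA : HasStrictFDerivAt (hessianOperator σ) (fderiv ℝ (hessianOperator σ) y) y :=
    (contDiffAt_hessianOperator hσ (m := 1) (by norm_num)).hasStrictFDerivAt (by simp)
  have hN := hasStrictFDerivAt_gradient hσ₂
  have hAN := hA.clm_apply hN
  have hcτ := hasStrictFDerivAt_const (𝕜 := ℝ) τ y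
  have hσ' : fderiv ℝ σ y ≠ 0 := fun h => by
    have hy : ‖∇ σ y‖ = 1 := hunit.self_of_nhds rfl
    simp [gradient, h] at hy
  have hlevel : ∀ᶠ z in 𝓝 y, σ z = σ y → ⟪hessianOperator σ z (∇ σ z), τ⟫
      - ⟪hessianOperator σ z (∇ σ z), ∇ σ z⟫ * ⟪∇ σ z, τ⟫ = 0 := by
    filter_upwards [hunit.eventually_nhds, hσ.eventually (by simp)] with z hz hσz hzy
    rw [← hzy] at hz
    rw [← real_inner_smul_left, ← inner_sub_left, ← hessianOperator_apply_gradient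
      (hσz.of_le (by norm_num)) hz, sub_self, inner_zero_left]
  obtain ⟨c, hc⟩ := exists_fderiv_eq_smul_of_eventually_const_on_level
    (hσ.hasStrictFDerivAt (by simp))
    ((hAN.inner ℝ hcτ).fun_sub ((hAN.inner ℝ hN).fun_mul (hN.inner ℝ hcτ))) hσ'
    (hlevel.mono fun z hz hzy => (hz hzy).trans (hlevel.self_of_nhds rfl).symm)
  have hderiv := DFunLike.congr_fun hc τ
  have hthird : fderiv ℝ (hessianOperator σ) y τ (∇ σ y) =
      fderiv ℝ (hessianOperator σ) y (∇ σ y) τ :=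
    (contDiffAt_gradient_s17 hσ (m := 2) (by norm_num)).isSymmSndFDerivAt (by simp) τ (∇ σ y)
  have hswap : ⟪hessianOperator σ y (hessianOperator σ y τ), τ⟫ = ‖hessianOperator σ y τ‖ ^ 2 :=
    (isSymmetric_hessianOperator hσ₂ _ _).trans (real_inner_self_eq_norm_sq _)
  have hστ : fderiv ℝ σ y τ = 0 := by rw [← inner_gradient_left, hτ]
  simp only [sub_apply, add_apply, smul_apply, zero_apply, ContinuousLinearMap.comp_apply,
    ContinuousLinearMap.prod_apply, ContinuousLinearMap.flip_apply, fderivInnerCLM_apply,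
    inner_add_left, inner_zero_right, smul_eq_mul, zero_smul, mul_zero, zero_add, add_zero,
    hτ, hστ, hthird, hswap] at hderiv
  linarith

theorem norm_hessianOperator_apply_sq_le {τ : F} (hσ : ContDiffAt ℝ 2 σ y)
    (hunit : ∀ᶠ z in 𝓝 y, σ z = σ y → ‖∇ σ z‖ = 1)
    (hconv : ∀ v : F, ⟪∇ σ y, v⟫ = 0 → 0 ≤ Hess σ y v v) (hτ : ⟪∇ σ y, τ⟫ = 0) :
    ‖hessianOperator σ y τ‖ ^ 2 ≤ ‖hessianOperator σ y‖ * ⟪hessianOperator σ y τ, τ⟫ := by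
  have hA := isSymmetric_hessianOperator hσ
  refine norm_apply_sq_le_of_nonneg_on (K := (ℝ ∙ ∇ σ y)ᗮ) hA (fun v hv => ?_) ?_ ?_
  · rw [← hess_eq_inner_hessianOperator hσ]
    exact hconv v (Submodule.mem_orthogonal_singleton_iff_inner_right.1 hv)
  · exact Submodule.mem_orthogonal_singleton_iff_inner_right.2 hτ
  · have hswap : ⟪hessianOperator σ y (∇ σ y), τ⟫ = ⟪∇ σ y, hessianOperator σ y τ⟫ := hA _ _
    rw [Submodule.mem_orthogonal_singleton_iff_inner_right, ← hswap,
      hessianOperator_apply_gradient hσ hunit, real_inner_smul_left, hτ, mul_zero]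

theorem inner_hessianOperator_add_smul_nonneg {s : ℝ} {τ : F} (hσ : ContDiffAt ℝ 3 σ y)
    (hunit : ∀ᶠ z in 𝓝 y, σ z = σ y → ‖∇ σ z‖ = 1)
    (hconv : ∀ v : F, ⟪∇ σ y, v⟫ = 0 → 0 ≤ Hess σ y v v)
    (hs : |s| * (2 * ‖hessianOperator σ y‖) ≤ 1) (hτ : ⟪∇ σ y, τ⟫ = 0) :
    0 ≤ ⟪(hessianOperator σ y + s • fderiv ℝ (hessianOperator σ) y (∇ σ y)) τ, τ⟫ := by
  have hσ₂ : ContDiffAt ℝ 2 σ y := hσ.of_le (by norm_num)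
  have hsq := norm_hessianOperator_apply_sq_le hσ₂ hunit hconv hτ
  have hq := hconv τ hτ
  rw [hess_eq_inner_hessianOperator hσ₂] at hq
  rw [add_apply, smul_apply, inner_add_left, real_inner_smul_left,
    inner_fderiv_hessianOperator_gradient hσ hunit hτ]
  set A := hessianOperator σ y
  set N := ∇ σ y
  have hκ : |⟪A N, N⟫| ≤ ‖A‖ := by
    simpa only [N, hunit.self_of_nhds rfl, mul_one] using
      abs_inner_apply_le_of_opNorm_le (A := A) le_rfl N N
  have hvariation : |⟪A N, N⟫ * ⟪A τ, τ⟫ - ‖A τ‖ ^ 2| ≤ 2 * ‖A‖ * ⟪A τ, τ⟫ := by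
    calc |⟪A N, N⟫ * ⟪A τ, τ⟫ - ‖A τ‖ ^ 2|
        ≤ |⟪A N, N⟫ * ⟪A τ, τ⟫| + |‖A τ‖ ^ 2| := abs_sub _ _
      _ = |⟪A N, N⟫| * ⟪A τ, τ⟫ + ‖A τ‖ ^ 2 := by
        rw [abs_mul, abs_of_nonneg hq, abs_of_nonneg (sq_nonneg ‖A τ‖)]
      _ ≤ ‖A‖ * ⟪A τ, τ⟫ + ‖A‖ * ⟪A τ, τ⟫ := by gcongr
      _ = 2 * ‖A‖ * ⟪A τ, τ⟫ := by ring
  have hsmall : |s * (⟪A N, N⟫ * ⟪A τ, τ⟫ - ‖A τ‖ ^ 2)| ≤ ⟪A τ, τ⟫ := by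
    calc |s * (⟪A N, N⟫ * ⟪A τ, τ⟫ - ‖A τ‖ ^ 2)|
        ≤ |s| * (2 * ‖A‖ * ⟪A τ, τ⟫) := by rw [abs_mul]; gcongr
      _ = |s| * (2 * ‖A‖) * ⟪A τ, τ⟫ := by ring
      _ ≤ ⟪A τ, τ⟫ := mul_le_of_le_one_left hq hs
  linarith [neg_abs_le (s * (⟪A N, N⟫ * ⟪A τ, τ⟫ - ‖A τ‖ ^ 2))]

theorem exists_tendsto_sub_smul_gradient (hσ : ContDiffAt ℝ 2 σ p) (hp : σ p = 0)
    (hN : ∇ σ p ≠ 0) :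
    ∃ s : F → ℝ, Tendsto s (𝓝 p) (𝓝 0) ∧ s =O[𝓝 p] σ ∧
      ∀ᶠ x in 𝓝 p, σ (x - s x • ∇ σ x) = 0 := by
  have hσ₁ := hσ.hasStrictFDerivAt (by simp)
  have hN₁ := hasStrictFDerivAt_gradient hσ
  have htrans : fderiv ℝ σ p (∇ σ p) ≠ 0 := by
    rwa [← inner_gradient_left, Ne, inner_self_eq_zero]
  obtain ⟨s, hs, hfoot⟩ := exists_tendsto_apply_sub_smul_eq hσ₁ hN₁ htrans
  rw [hp] at hfoot
  exact ⟨s, hs, isBigO_of_apply_sub_smul_eq_zero hσ₁ hN₁.continuousAt htrans hs hfoot, hfoot⟩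

theorem exists_hess_ge_of_convex_zero_level (hσ : ContDiffAt ℝ 4 σ p) (hp : σ p = 0)
    (hunit : ∀ᶠ z in 𝓝 p, σ z = 0 → ‖∇ σ z‖ = 1)
    (hconv : ∀ᶠ z in 𝓝 p, σ z = 0 → ∀ τ : F, ⟪∇ σ z, τ⟫ = 0 → 0 ≤ Hess σ z τ τ) :
    ∃ C₁ > (0 : ℝ), ∃ C₂ > (0 : ℝ), ∀ᶠ x in 𝓝 p, ∀ ξ : F,
      -(C₁ * σ x ^ 2 * ‖ξ‖ ^ 2) - C₂ * ⟪∇ σ x, ξ⟫ ^ 2 / ‖∇ σ x‖ ^ 2 ≤ Hess σ x ξ ξ := by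
  have hσ₂ : ContDiffAt ℝ 2 σ p := hσ.of_le (by norm_num)
  have hp₁ : ‖∇ σ p‖ = 1 := hunit.self_of_nhds hp
  have hN := hasStrictFDerivAt_gradient hσ₂
  have hA := contDiffAt_hessianOperator hσ (m := 2) (by norm_num)
  have hA₁ := hA.hasStrictFDerivAt (by simp)
  obtain ⟨s, hs, hsσ, hfoot⟩ := exists_tendsto_sub_smul_gradient hσ₂ hp
    (norm_ne_zero_iff.1 (by rw [hp₁]; exact one_ne_zero))
  have hy := tendsto_sub_smul_nhds hN.continuousAt hs
  obtain ⟨a, ha, hTaylor⟩ :=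
    ((isBigO_sub_taylor_apply_sub_smul hA hN hs).trans (hsσ.pow 2)).exists_pos
  obtain ⟨b, -, hAy⟩ := ((isBigO_sub_apply_sub_smul hA₁ hN.continuousAt hs).trans hsσ).exists_pos
  obtain ⟨c, hc, hAc⟩ := (hA.continuousAt.isBigO_one ℝ).exists_pos
  obtain ⟨d, -, hNy⟩ := ((isBigO_sub_apply_sub_smul hN hN.continuousAt hs).trans hsσ).exists_pos
  have hsA : ∀ᶠ x in 𝓝 p, |s x| * (2 * ‖hessianOperator σ (x - s x • ∇ σ x)‖) ≤ 1 := by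
    have hlim := hs.abs.mul ((hA.continuousAt.tendsto.comp hy).norm.const_mul 2)
    rw [abs_zero, zero_mul] at hlim
    exact hlim.eventually_le_const one_pos
  have hN₂ : ∀ᶠ x in 𝓝 p, ‖∇ σ x‖ ^ 2 ≤ 2 :=
    (hN.continuousAt.norm.pow 2).eventually_le_const (by simp [hp₁])
  refine ⟨a + b ^ 2 + 2 * (c + 1) * d ^ 2, by positivity, 4 * (c + 1), by positivity, ?_⟩
  filter_upwards [hσ.eventually (by simp), hy.eventually (hσ.eventually (by simp)), hfoot,
    hy.eventually hunit.eventually_nhds, hy.eventually hconv, hsA, hN₂, hTaylor.bound, hAy.bound,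
    hAc.bound, hNy.bound] with x hσx hσy hσy₀ hunit_y hconv_y hsAx hNx hTaylor_x hAyx hAcx hNyx ξ
  rw [hess_eq_inner_hessianOperator (hσx.of_le (by norm_num))]
  rw [← hσy₀] at hunit_y
  exact inner_apply_self_ge_of_norm_sub_le
    (isSymmetric_hessianOperator (hσx.of_le (by norm_num))) (hunit_y.self_of_nhds rfl)
    (hessianOperator_apply_gradient (hσy.of_le (by norm_num)) hunit_y)
    (fun τ => inner_hessianOperator_add_smul_nonneg (hσy.of_le (by norm_num)) hunit_y
      (hconv_y hσy₀) hsAx) (by simpa using hTaylor_x) hAyx (by simpa using hAcx) hNyx hNx ξ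

end Hessian

section Domain

theorem eq_zero_of_mem_frontier_setOf_neg {X : Type*} [TopologicalSpace X] {σ : X → ℝ} {y : X}
    (hσ : ContinuousAt σ y) (hy : y ∈ frontier {z | σ z < 0}) : σ y = 0 := by
  refine le_antisymm ?_ ?_
  · by_contra! hpos
    obtain ⟨z, hz_pos : 0 < σ z, hz_neg : σ z < 0⟩ :=
      mem_closure_iff_nhds.1 hy.1 _ (hσ.eventually_const_lt hpos)
    exact lt_asymm hz_pos hz_neg
  · by_contra! hneg
    exact hy.2 (mem_interior_iff_mem_nhds.2 (hσ.eventually_lt_const hneg))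

theorem mem_frontier_setOf_neg {F : Type*} [NormedAddCommGroup F] [NormedSpace ℝ F] {σ : F → ℝ}
    {y : F} (hy : σ y = 0) (hσ' : fderiv ℝ σ y ≠ 0) : y ∈ frontier {z | σ z < 0} := by
  refine ⟨?_, fun hint => (interior_subset hint).ne hy⟩
  by_contra hout
  refine hσ' (IsLocalMin.fderiv_eq_zero ?_)
  filter_upwards [isClosed_closure.isOpen_compl.mem_nhds hout] with z hz
  rw [hy]
  exact not_lt.1 fun hneg => hz (subset_closure hneg)

theorem frontier_inter_eq_of_inter_eq {X : Type*} [TopologicalSpace X] {s t U : Set X}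
    (hU : IsOpen U) (h : s ∩ U = t ∩ U) : frontier s ∩ U = frontier t ∩ U := by
  rw [← frontier_inter_open_inter hU, h, frontier_inter_open_inter hU]

variable {F : Type*} [NormedAddCommGroup F] [InnerProductSpace ℝ F] [CompleteSpace F]

theorem quadratic_negativity_estimate_general (Ω U : Set F) (hU : IsOpen U) {p : F}
    (hp : p ∈ frontier Ω) (hpU : p ∈ U) {σ : F → ℝ} (hσ : ContDiffOn ℝ 4 σ U)
    (hdef : Ω ∩ U = {x ∈ U | σ x < 0}) (hgrad : ∀ y ∈ frontier Ω ∩ U, ‖∇ σ y‖ = 1)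
    (hconv : ∀ y ∈ frontier Ω ∩ U, ∀ τ : F, ⟪∇ σ y, τ⟫ = 0 → 0 ≤ Hess σ y τ τ) :
    ∃ V ⊆ U, IsOpen V ∧ p ∈ V ∧ ∃ C₁ > (0 : ℝ), ∃ C₂ > (0 : ℝ), ∀ x ∈ V, ∀ ξ : F,
      -(C₁ * σ x ^ 2 * ‖ξ‖ ^ 2) - C₂ * ⟪∇ σ x, ξ⟫ ^ 2 / ‖∇ σ x‖ ^ 2 ≤ Hess σ x ξ ξ := by
  have hfrontier : frontier Ω ∩ U = frontier {x | σ x < 0} ∩ U :=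
    frontier_inter_eq_of_inter_eq hU (hdef.trans (Set.inter_comm U {x | σ x < 0}))
  have hσp : ContDiffAt ℝ 4 σ p := hσ.contDiffAt (hU.mem_nhds hpU)
  have hp₀ : σ p = 0 :=
    eq_zero_of_mem_frontier_setOf_neg hσp.continuousAt (hfrontier.subset ⟨hp, hpU⟩).1
  have hne : ∀ᶠ z in 𝓝 p, fderiv ℝ σ z ≠ 0 := by
    refine (hσp.fderiv_right (m := 3) (by norm_num)).continuousAt.eventually_ne fun h => ?_
    simpa [gradient, h] using hgrad p ⟨hp, hpU⟩
  have hbdry : ∀ᶠ z in 𝓝 p, σ z = 0 → z ∈ frontier Ω ∩ U := by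
    filter_upwards [hne, hU.mem_nhds hpU] with z hz hzU hz₀
    exact hfrontier.superset ⟨mem_frontier_setOf_neg hz₀ hz, hzU⟩
  obtain ⟨C₁, hC₁, C₂, hC₂, hHess⟩ := exists_hess_ge_of_convex_zero_level hσp hp₀
    (hbdry.mono fun z hz hz₀ => hgrad z (hz hz₀)) (hbdry.mono fun z hz hz₀ => hconv z (hz hz₀))
  obtain ⟨V, hV, hVo, hpV⟩ := _root_.mem_nhds_iff.1 (inter_mem hHess (hU.mem_nhds hpU))
  exact ⟨V, fun x hx => (hV hx).2, hVo, hpV, C₁, hC₁, C₂, hC₂, fun x hx => (hV hx).1⟩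

end Domain

/-- for a convex domain and a defining function `σ` with unit gradient on
the boundary, the Hessian of `σ` near a boundary point `p` is bounded below by
`−C₁σ²‖ξ‖² − C₂|⟨∇σ,ξ⟩|²/‖∇σ‖²`. -/
theorem quadratic_negativity_estimate
    {n : ℕ} (Ω U : Set (E n)) (hΩ : IsOpen Ω) (hU : IsOpen U)
    (p : E n) (hp : p ∈ frontier Ω) (hpU : p ∈ U)
    (σ : E n → ℝ) (hσ : ContDiffOn ℝ (⊤ : ℕ∞) σ U)
    (hdef : Ω ∩ U = {x ∈ U | σ x < 0})
    (hgrad : ∀ y ∈ frontier Ω ∩ U, ‖gradient σ y‖ = 1)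
    (hconv : ∀ y ∈ frontier Ω ∩ U, ∀ τ : E n, ⟪gradient σ y, τ⟫ = 0 →
      0 ≤ Hess σ y τ τ) :
    ∃ V ⊆ U, IsOpen V ∧ p ∈ V ∧ ∃ C₁ > (0:ℝ), ∃ C₂ > (0:ℝ), ∀ x ∈ V, ∀ ξ : E n,
      -(C₁ * (σ x) ^ 2 * ‖ξ‖ ^ 2)
        - C₂ * ⟪gradient σ x, ξ⟫ ^ 2 / ‖gradient σ x‖ ^ 2 ≤ Hess σ x ξ ξ :=
  quadratic_negativity_estimate_general Ω U hU hp hpU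
    (hσ.of_le (WithTop.coe_le_coe.2 le_top)) hdef hgrad hconv
end
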